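/- arXiv:2302.04731 — 3 statements merged into one kernel-verified Lean document; each statement's English description precedes it below -/
import Mathlib

section
/- There exists a decidable hypothesis class 𝓗 ⊆ {0,1}^ℕ consisting only of finitely supported functions which is properly CPAC learnable but not properly SCPAC learnable. -/
/-!
The class consists of hypotheses living on blocks. The `k`-th block is the set of points `(k, i)`
with `i ≤ k`; the class contains every block with one point removed, and, if program `k` halts on
input `0` after `s` steps, the full `k`-th block together with a marker point encoding `s`. The
marker makes the class decidable.

*Not properly SCPAC learnable* (`not_properlySCPAC`). On the uniform distribution on the `k`-th
block with labels `1`, a proper learner of accuracy `1 / (k + 2)` outputs a hypothesis containing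
the full block if program `k` halts, and it can never do so if the program does not halt. If the
required sample size were computable, trying all samples would decide the halting problem.

*Properly CPAC learnable* (`pacLearns`). The learner minimizes the empirical error over finitely
many hypotheses, with codes bounded in terms of the sample. Only full blocks with a marker far
outside of the sample can be overlooked. If `k` is large, deleting a rare point from the block
instead costs an empirical error of at most `1 / (k + 1)`; each of the finitely many small `k` has at
most one marker, which is found once the sample is long enough. Hence the learner is an asymptotic
empirical risk minimizer (`asymptotic_erm`).

Uniform convergence does not need VC theory here: the 0-1 loss of each hypothesis is a linear
functional of norm at most `3` applied to a bounded feature vector in `ℓ²`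
(`inner_weight_feature`), so the deviation between empirical and true error is bounded, uniformly in
the hypothesis, by the deviation of the mean of i.i.d. feature vectors. The second moment of the
latter is `O(1 / m)` (`secondMoment_le`), and Markov's inequality concludes.
-/

open Filter
open scoped ENNReal

/-- A hypothesis is a function `ℕ → Bool` (i.e. an element of `{0,1}^ℕ`). -/
abbrev Hyp := ℕ → Bool

/-- A sample is a finite sequence of labeled examples. -/
abbrev Sample := List (ℕ × Bool)

/-- A learner maps samples to hypotheses. -/
abbrev Learner := Sample → Hyp

/-- Generalization error `L_D(h) = Pr_{(x,y)∼D}[h(x) ≠ y]`. -/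
noncomputable def genError (D : PMF (ℕ × Bool)) (h : Hyp) : ℝ≥0∞ :=
  D.toOuterMeasure {p | h p.1 ≠ p.2}

/-- The distribution of `m` i.i.d. draws from `D`, as a PMF on samples of size `m`. -/
noncomputable def iidPMF (D : PMF (ℕ × Bool)) : ℕ → PMF Sample
  | 0 => PMF.pure []
  | m + 1 => D.bind fun p => (iidPMF D m).map (List.cons p)

/-- `Pr_{S ∼ D^m}[S ∈ E]`. -/
noncomputable def samplePr (D : PMF (ℕ × Bool)) (m : ℕ) (E : Set Sample) : ℝ≥0∞ :=
  (iidPMF D m).toOuterMeasure E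

/-- The PAC inequality for accuracy/confidence parameter `n` and sample size `m`:
for every distribution `D`,
`Pr_{S∼D^m}[L_D(A(S)) ≤ inf_{h∈H} L_D(h) + 1/n] ≥ 1 − 1/n`. -/
def PACCondition (A : Learner) (H : Set Hyp) (n m : ℕ) : Prop :=
  ∀ D : PMF (ℕ × Bool),
    1 - ((n : ℝ≥0∞))⁻¹ ≤
      samplePr D m {S | genError D (A S) ≤ (⨅ h ∈ H, genError D h) + ((n : ℝ≥0∞))⁻¹}

/-- `A` PAC learns `H`. -/
def PACLearns (A : Learner) (H : Set Hyp) : Prop :=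
  ∀ n : ℕ, ∃ m₀ : ℕ, ∀ m ≥ m₀, PACCondition A H n m

/-- The sample complexity of `A` w.r.t. `H`: the minimal `m₀` such that the PAC
inequality for `n` holds for all `m ≥ m₀`. -/
noncomputable def sampleComplexity (A : Learner) (H : Set Hyp) (n : ℕ) : ℕ :=
  sInf {m₀ | ∀ m ≥ m₀, PACCondition A H n m}

/-- A learner is computable if the two-argument function `(S, x) ↦ A(S)(x)` is computable
(equivalently, there is an algorithm producing from `S` a Turing machine computing the
total function `A(S)`). -/
def ComputableLearner (A : Learner) : Prop :=
  Computable₂ fun (S : Sample) (x : ℕ) => A S x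

/-- A learner is proper for `H` if it only outputs hypotheses from `H`. -/
def ProperFor (A : Learner) (H : Set Hyp) : Prop := ∀ S, A S ∈ H

/-- `H` is CPAC learnable: some computable learner PAC learns it. -/
def CPACLearnable (H : Set Hyp) : Prop :=
  ∃ A : Learner, ComputableLearner A ∧ PACLearns A H

/-- `H` is properly CPAC learnable. -/
def ProperlyCPACLearnable (H : Set Hyp) : Prop :=
  ∃ A : Learner, ComputableLearner A ∧ ProperFor A H ∧ PACLearns A H

/-- `H` is SCPAC learnable: some computable learner PAC learns it with sample complexity
bounded by a total computable function. -/
def SCPACLearnable (H : Set Hyp) : Prop :=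
  ∃ A : Learner, ComputableLearner A ∧ PACLearns A H ∧
    ∃ g : ℕ → ℕ, Computable g ∧ ∀ n, sampleComplexity A H n ≤ g n

/-- `H` is properly SCPAC learnable. -/
def ProperlySCPACLearnable (H : Set Hyp) : Prop :=
  ∃ A : Learner, ComputableLearner A ∧ ProperFor A H ∧ PACLearns A H ∧
    ∃ g : ℕ → ℕ, Computable g ∧ ∀ n, sampleComplexity A H n ≤ g n

/-- Empirical error `L_S(h) = |{i : h(x_i) ≠ y_i}| / |S|`. -/
noncomputable def empError (S : Sample) (h : Hyp) : ℝ≥0∞ :=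
  ((S.countP fun p => h p.1 != p.2 : ℕ) : ℝ≥0∞) / (S.length : ℝ≥0∞)

/-- `A` is an ERM for `H`: on every sample it outputs a hypothesis of `H` minimizing
the empirical error over `H`. -/
def IsERM (A : Learner) (H : Set Hyp) : Prop :=
  ∀ S : Sample, A S ∈ H ∧ ∀ h ∈ H, empError S (A S) ≤ empError S h

/-- `A` is an asymptotic ERM for `H`. -/
def IsAsymptoticERM (A : Learner) (H : Set Hyp) : Prop :=
  ProperFor A H ∧
  ∃ ε : ℕ → ℝ≥0∞, (∀ m, ε m ≤ 1) ∧ Tendsto ε atTop (nhds 0) ∧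
    ∀ S : Sample, empError S (A S) ≤ (⨅ h ∈ H, empError S h) + ε S.length

/-- `H` shatters the finite set `s`. -/
def Shatters (H : Set Hyp) (s : Finset ℕ) : Prop :=
  ∀ g : ℕ → Bool, ∃ h ∈ H, ∀ x ∈ s, h x = g x

/-- The VC dimension of `H` is at most `d`. -/
def VCDimAtMost (H : Set Hyp) (d : ℕ) : Prop :=
  ∀ s : Finset ℕ, Shatters H s → s.card ≤ d

/-- `H` has finite VC dimension. -/
def FiniteVCDim (H : Set Hyp) : Prop := ∃ d, VCDimAtMost H d

/-- `w` is a `k`-witness of VC dimension for `H`: on every increasing `(k+1)`-tuple it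
produces a Boolean `(k+1)`-tuple which is not the trace of any `h ∈ H` on the tuple. -/
def IsKWitness (k : ℕ) (w : List ℕ → List Bool) (H : Set Hyp) : Prop :=
  ∀ xs : List ℕ, xs.length = k + 1 → xs.Chain' (· < ·) →
    (w xs).length = k + 1 ∧ ∀ h ∈ H, xs.map h ≠ w xs

/-- The support of a hypothesis: `h⁻¹(1)`. -/
def hypSupport (h : Hyp) : Set ℕ := {x | h x = true}

/-- `h` is finitely supported. -/
def FinitelySupported (h : Hyp) : Prop := (hypSupport h).Finite

/-- The finitely supported hypothesis with support (the set of elements of) `l`. -/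
def listIndicator (l : List ℕ) : Hyp := fun x => decide (x ∈ l)

/-- A class of finitely supported hypotheses is decidable: there is an algorithm that,
given the support of a finitely supported `h` (as a list), decides whether `h ∈ H`. -/
def DecidableClass (H : Set Hyp) : Prop :=
  ∃ d : List ℕ → Bool, Computable d ∧ ∀ l : List ℕ, (d l = true ↔ listIndicator l ∈ H)

/-- `H` shatters the full binary tree of depth `d` whose node at binary path `p`
(with `|p| < d`) is labeled `t p`: every leaf (a binary path of length `d`) is reached
by some `h ∈ H`, going right at a node labeled `x` iff `h x = 1`. -/
def ShattersTree (H : Set Hyp) (d : ℕ) (t : List Bool → ℕ) : Prop :=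
  ∀ l : List Bool, l.length = d →
    ∃ h ∈ H, ∀ (i : ℕ) (hi : i < l.length), l[i] = h (t (l.take i))

/-! ### The class `𝓗_f` -/

/-- The `j`-th smallest element of the `k`-th block `I_k` of positive even numbers
(`1 ≤ j ≤ k`): `n_{kj} = k(k-1) + 2j`. -/
def nkj (k j : ℕ) : ℕ := k * (k - 1) + 2 * j

/-- The block `I_k` (of size `k`). -/
def Iblk (k : ℕ) : Finset ℕ := (Finset.Icc 1 k).image (nkj k)

/-- `h_{kj}`: the indicator of `I_k \ {n_{kj}}`. -/
def hkj (k j : ℕ) : Hyp := fun n => decide (n ∈ Iblk k ∧ n ≠ nkj k j)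

/-- `h_a`: the indicator of `I_{f(a)} ∪ {2a+1}`. -/
def hA (f : ℕ → ℕ) (a : ℕ) : Hyp := fun n => decide (n ∈ Iblk (f a) ∨ n = 2 * a + 1)

/-- The class `𝓗_f = {h_{kj} : 1 ≤ j ≤ k} ∪ {h_a : a ∈ ℕ}`. -/
def Hf (f : ℕ → ℕ) : Set Hyp :=
  {h | ∃ k j, 1 ≤ j ∧ j ≤ k ∧ h = hkj k j} ∪ {h | ∃ a, h = hA f a}

/-! ### Good hypotheses w.r.t. a witness -/

/-- `h` is good w.r.t. the `k`-witness `w`: it has finite support and disagrees with `w`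
on every increasing `(k+1)`-tuple lying strictly below `max supp(h)`. -/
def IsGood (k : ℕ) (w : List ℕ → List Bool) (h : Hyp) : Prop :=
  FinitelySupported h ∧
  ∀ xs : List ℕ, xs.length = k + 1 → xs.Chain' (· < ·) →
    (∀ x ∈ xs, x < sSup (hypSupport h)) → xs.map h ≠ w xs

/-- The set of good hypotheses w.r.t. `w`. -/
def Hgood (k : ℕ) (w : List ℕ → List Bool) : Set Hyp := {h | IsGood k w h}

namespace HaltingBlocks

/-! ### The class of blocks with halting certificates -/

open Nat.Partrec (Code)

/-- The program with number `k` halts on input `0` within `s` steps of bounded evaluation. -/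
def halts (k s : ℕ) : Bool := (Code.evaln s (Denumerable.ofNat Code k) 0).isSome

/-- `s` is the halting time of program `k`; by minimality there is at most one for each `k`. -/
def Cert (k s : ℕ) : Prop := halts k s = true ∧ ∀ s' < s, halts k s' = false

/-- The codes `(k, t)` in use: either `t ≤ k`, or `t = k + 1 + s` where `s` is the halting time of
program `k` (the subtraction is exact, as `k < t` in the second case). -/
def Valid (k t : ℕ) : Prop := t ≤ k ∨ Cert k (t - (k + 1))

/-- Membership of `x` in the support of the hypothesis coded by `c`. With `c = (k, t)` valid, the
support is `{k} × ({0, …, k} ∆ {t})`: the `k`-th block without its `t`-th point if `t ≤ k`, and the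
full block with the marker `(k, t)` if `t` encodes the halting time. An invalid `c` gives `∅`, which
is also the hypothesis coded by `(0, 0)`. -/
def HypRel (c x : ℕ) : Prop :=
  Valid c.unpair.1 c.unpair.2 ∧ x.unpair.1 = c.unpair.1 ∧
    ¬ (x.unpair.2 ≤ c.unpair.1 ↔ x.unpair.2 = c.unpair.2)

open Classical in
/-- The hypothesis with code `c`. -/
noncomputable def hyp (c : ℕ) : Hyp := fun x => decide (HypRel c x)

/-- The class witnessing the separation. -/
def blockClass : Set Hyp := Set.range hyp

lemma hyp_eq_true {c x : ℕ} : hyp c x = true ↔ HypRel c x := by simp [hyp]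

lemma hypRel_pair {k t x i : ℕ} : HypRel (Nat.pair k t) (Nat.pair x i) ↔
    Valid k t ∧ x = k ∧ ¬ (i ≤ k ↔ i = t) := by simp [HypRel]

lemma Cert.unique {k s s' : ℕ} (h : Cert k s) (h' : Cert k s') : s = s' := by
  rcases lt_trichotomy s s' with hl | hl | hl
  · have := h'.2 s hl; simp [h.1] at this
  · exact hl
  · have := h.2 s' hl; simp [h'.1] at this

lemma exists_cert_iff (k : ℕ) :
    (∃ s, Cert k s) ↔ ((Denumerable.ofNat Code k).eval 0).Dom := by
  rw [Part.dom_iff_mem]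
  constructor
  · rintro ⟨s, hs, -⟩
    obtain ⟨y, hy⟩ := Option.isSome_iff_exists.1 hs
    exact ⟨y, Code.evaln_sound hy⟩
  · rintro ⟨y, hy⟩
    obtain ⟨s, hs⟩ := Code.evaln_complete.1 hy
    have hex : ∃ s, halts k s = true := ⟨s, Option.isSome_iff_exists.2 ⟨y, hs⟩⟩
    refine ⟨Nat.find hex, Nat.find_spec hex, fun s' hs' => ?_⟩
    simpa using Nat.find_min hex hs'

lemma not_computable_cert : ¬ ComputablePred fun k => ∃ s, Cert k s := by
  intro h
  obtain ⟨f, hf, hfe⟩ := ComputablePred.computable_iff.1 h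
  refine ComputablePred.halting_problem 0 (ComputablePred.computable_iff.2
    ⟨fun c => f (Encodable.encode c), hf.comp Computable.encode, ?_⟩)
  funext c
  have := congrFun hfe (Encodable.encode c)
  rw [← this, exists_cert_iff, Denumerable.ofNat_encode]

lemma hypSupport_finite (c : ℕ) : FinitelySupported (hyp c) := by
  set k := c.unpair.1
  set t := c.unpair.2
  refine ((Set.finite_Iic (max k t)).image (Nat.pair k)).subset ?_
  intro x hx
  obtain ⟨-, h1, h2⟩ := hyp_eq_true.1 hx
  refine ⟨x.unpair.2, ?_, ?_⟩
  · simp only [Set.mem_Iic, le_max_iff]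
    by_contra! hcon
    exact h2 ⟨fun h => absurd h (not_le.2 hcon.1), fun h => absurd h hcon.2.ne'⟩
  · change Nat.pair c.unpair.1 _ = x
    rw [← h1, Nat.pair_unpair]

/-! ### Computability -/

lemma primrec_halts : Primrec₂ halts := by
  have h := Code.primrec_evaln.comp
    (Primrec.pair (Primrec.pair Primrec.snd ((Primrec.ofNat Code).comp Primrec.fst))
      (Primrec.const 0) : Primrec fun a : ℕ × ℕ => ((a.2, Denumerable.ofNat Code a.1), 0))
  exact Primrec.option_isSome.comp h

lemma primrec_cert : PrimrecRel Cert := by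
  have h1 : PrimrecPred fun a : ℕ × ℕ => halts a.1 a.2 = true :=
    Primrec.eq.comp primrec_halts (Primrec.const true)
  have h2 : PrimrecRel fun (s' k : ℕ) => halts k s' = false :=
    Primrec.eq.comp (primrec_halts.comp Primrec.snd Primrec.fst) (Primrec.const false)
  exact h1.and (h2.forall_lt.comp Primrec.snd Primrec.fst)

/-- Unlike `PrimrecRel.exists_lt`, the parameter may live in any `Primcodable` type. -/
lemma primrecRel_exists_lt {α : Type*} [Primcodable α] {R : ℕ → α → Prop} (hR : PrimrecRel R) :
    PrimrecRel fun (n : ℕ) (a : α) => ∃ x < n, R x a :=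
  (hR.exists_mem_list.comp (Primrec.list_range.comp Primrec.fst) Primrec.snd).of_eq (by simp)

lemma primrecRel_forall_lt {α : Type*} [Primcodable α] {R : ℕ → α → Prop} (hR : PrimrecRel R) :
    PrimrecRel fun (n : ℕ) (a : α) => ∀ x < n, R x a :=
  (hR.forall_mem_list.comp (Primrec.list_range.comp Primrec.fst) Primrec.snd).of_eq (by simp)

lemma primrec_valid : PrimrecRel Valid :=
  (Primrec.nat_le.comp Primrec.snd Primrec.fst).or
    (primrec_cert.comp Primrec.fst
      (Primrec.nat_sub.comp Primrec.snd (Primrec.succ.comp Primrec.fst)))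

lemma primrec_hypRel : PrimrecRel HypRel := by
  have hc : Primrec fun a : ℕ × ℕ => a.1.unpair := Primrec.unpair.comp Primrec.fst
  have hx : Primrec fun a : ℕ × ℕ => a.2.unpair := Primrec.unpair.comp Primrec.snd
  have hk := Primrec.fst.comp hc
  have ht := Primrec.snd.comp hc
  have hx1 := Primrec.fst.comp hx
  have hx2 := Primrec.snd.comp hx
  have h1 : PrimrecPred fun a : ℕ × ℕ => a.2.unpair.2 ≤ a.1.unpair.1 := Primrec.nat_le.comp hx2 hk
  have h2 : PrimrecPred fun a : ℕ × ℕ => a.2.unpair.2 = a.1.unpair.2 := Primrec.eq.comp hx2 ht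
  have := (primrec_valid.comp hk ht).and ((Primrec.eq.comp hx1 hk).and
    ((h1.and h2).or (h1.not.and h2.not)).not)
  refine this.of_eq fun a => ?_
  unfold HypRel
  tauto

lemma primrec_hyp : Primrec₂ hyp := by
  classical
  refine (primrecRel_iff_primrec_decide.1 primrec_hypRel).of_eq fun c x => ?_
  simp only [hyp]

/-- The sum of a list, which bounds each of its elements. -/
def total : List ℕ → ℕ := fun l => l.foldr (· + ·) 0

lemma le_total {l : List ℕ} {x : ℕ} (h : x ∈ l) : x ≤ total l := by
  induction l with
  | nil => simp at h
  | cons a l ih =>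
    have hc : total (a :: l) = a + total l := rfl
    rcases List.mem_cons.1 h with rfl | h
    · omega
    · have := ih h; omega

lemma pair_lt_sq {k t M : ℕ} (hk : k ≤ M) (ht : t ≤ M) : Nat.pair k t < (M + 1) ^ 2 :=
  (Nat.pair_lt_max_add_one_sq k t).trans_le (Nat.pow_le_pow_left (by omega) 2)

/-- Whether a list is the support of `hyp c` is settled by inspecting points below an explicit
bound. -/
lemma hyp_ext_of_bounded {l : List ℕ} {c B : ℕ} (hB : (total l + 1 + c) ≤ B)
    (h : ∀ x < (B + 1) ^ 2, (x ∈ l ↔ HypRel c x)) : listIndicator l = hyp c := by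
  classical
  funext x
  simp only [listIndicator, hyp, decide_eq_decide]
  by_cases hx : x < (B + 1) ^ 2
  · exact h x hx
  · refine iff_of_false (fun hl => hx ?_) (fun hr => hx ?_)
    · have := le_total hl
      nlinarith
    · obtain ⟨-, h1, h2⟩ := hr
      have hk := Nat.unpair_left_le c
      have ht := Nat.unpair_right_le c
      rw [← Nat.pair_unpair x]
      refine pair_lt_sq (by omega) ?_
      by_contra! hcon
      exact h2 ⟨fun _ => by omega, fun _ => by omega⟩

/-- A hypothesis of the class has a code bounded in terms of its support: a point `(k, i)` of the
support reveals `k`, and `(k, t)` itself lies in the support if `k < t`. -/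
lemma exists_small_code {l : List ℕ} {c : ℕ} (h : listIndicator l = hyp c) :
    ∃ c' < (total l + 1) ^ 2, listIndicator l = hyp c' := by
  classical
  have hmem : ∀ x, x ∈ l ↔ HypRel c x := fun x => by
    have := congrFun h x
    simpa [listIndicator, hyp] using this
  by_cases hl : l = []
  · refine ⟨Nat.pair 0 0, pair_lt_sq (by omega) (by omega), ?_⟩
    funext x
    simp only [hl, listIndicator, hyp, decide_eq_decide]
    refine iff_of_false (by simp) ?_
    rw [← Nat.pair_unpair x, hypRel_pair]
    simp
  · obtain ⟨x, hx⟩ := List.exists_mem_of_ne_nil l hl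
    obtain ⟨hv, h1, -⟩ := (hmem x).1 hx
    have hk : c.unpair.1 ≤ total l := by
      rw [← h1]; exact (Nat.unpair_left_le x).trans (le_total hx)
    refine ⟨c, ?_, h⟩
    rw [← Nat.pair_unpair c]
    refine pair_lt_sq hk ?_
    by_contra! hcon
    have hm : Nat.pair c.unpair.1 c.unpair.2 ∈ l := by
      rw [hmem]; nth_rewrite 1 [← Nat.pair_unpair c]; rw [hypRel_pair]
      refine ⟨hv, rfl, ?_⟩
      omega
    have := le_total hm
    have := Nat.right_le_pair c.unpair.1 c.unpair.2
    omega

lemma primrec_total : Primrec total :=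
  Primrec.list_foldr Primrec.id (Primrec.const 0)
    ((Primrec.nat_add.comp (Primrec.fst.comp Primrec.snd) (Primrec.snd.comp Primrec.snd)).to₂)

lemma decidableClass_blockClass : DecidableClass blockClass := by
  classical
  have hmem : PrimrecRel fun (x : ℕ) (l : List ℕ) => x ∈ l := by
    have h : PrimrecRel fun (l : List ℕ) (x : ℕ) => ∃ a ∈ l, a = x :=
      PrimrecRel.exists_mem_list Primrec.eq
    exact (h.comp Primrec.snd Primrec.fst).of_eq fun a => by simp
  -- `Q x (l, c)`: the two hypotheses agree at `x`
  have hQ : PrimrecRel fun (x : ℕ) (a : List ℕ × ℕ) => (x ∈ a.1 ↔ HypRel a.2 x) := by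
    have h1 : PrimrecPred fun b : ℕ × (List ℕ × ℕ) => b.1 ∈ b.2.1 :=
      hmem.comp Primrec.fst (Primrec.fst.comp Primrec.snd)
    have h2 : PrimrecPred fun b : ℕ × (List ℕ × ℕ) => HypRel b.2.2 b.1 :=
      primrec_hypRel.comp (Primrec.snd.comp Primrec.snd) Primrec.fst
    exact ((h1.and h2).or (h1.not.and h2.not)).of_eq fun b => by tauto
  have hsq : ∀ {α : Type} [Primcodable α] {f : α → ℕ}, Primrec f →
      Primrec fun a => (f a + 1) ^ 2 := fun {α} _ {f} hf => by
    have hs := Primrec.succ.comp hf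
    exact (Primrec.nat_mul.comp hs hs).of_eq fun a => by simp [sq]
  have hP : PrimrecRel fun (c : ℕ) (l : List ℕ) =>
      ∀ x < ((total l + 1 + c) + 1) ^ 2, (x ∈ l ↔ HypRel c x) := by
    have hb : Primrec fun a : ℕ × List ℕ => ((total a.2 + 1 + a.1) + 1) ^ 2 :=
      hsq (Primrec.nat_add.comp (Primrec.succ.comp (primrec_total.comp Primrec.snd)) Primrec.fst)
    exact (primrecRel_forall_lt hQ).comp hb (Primrec.pair Primrec.snd Primrec.fst)
  have hD := (primrecRel_exists_lt hP).comp (hsq primrec_total) Primrec.id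
  refine ⟨_, (primrecPred_iff_primrec_decide.1 hD).to_comp, fun l => ?_⟩
  simp only [decide_eq_true_eq, id]
  constructor
  · rintro ⟨c, -, hc⟩
    exact ⟨c, (hyp_ext_of_bounded le_rfl hc).symm⟩
  · rintro ⟨c, hc⟩
    obtain ⟨c', hlt, hc'⟩ := exists_small_code hc.symm
    refine ⟨c', hlt, fun x _ => ?_⟩
    have := congrFun hc' x
    simpa [listIndicator, hyp] using this

/-! ### The learner -/

/-- The number of mistakes of `hyp c` on the sample `S`. -/
noncomputable def errCount (S : Sample) (c : ℕ) : ℕ := S.countP fun p => hyp c p.1 != p.2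

/-- A common bound for the length of the sample and all its points. -/
def size (S : Sample) : ℕ := S.foldr (fun p n => n + p.1 + 1) 0

/-- A code below `n` (or `0`, if `n = 0`) with the fewest mistakes on `S`. -/
noncomputable def best (S : Sample) (n : ℕ) : ℕ :=
  Nat.rec 0 (fun c b => if errCount S c < errCount S b then c else b) n

/-- The learner minimizes the number of mistakes over the codes `(k, t)` with `k, t ≤ size S`. -/
noncomputable def learner : Learner := fun S => hyp (best S ((size S + 1) ^ 2))

lemma best_le (S : Sample) {n c : ℕ} (hc : c < n) : errCount S (best S n) ≤ errCount S c := by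
  induction n with
  | zero => omega
  | succ n ih =>
    have hb : best S (n + 1) = if errCount S n < errCount S (best S n) then n else best S n := rfl
    rw [hb]
    rcases Nat.lt_succ_iff_lt_or_eq.1 hc with h | rfl
    · have := ih h
      split_ifs <;> omega
    · split_ifs <;> omega

lemma primrec_errCount : Primrec₂ errCount := by
  have h : Primrec₂ fun (a : Sample × ℕ) (b : (ℕ × Bool) × ℕ) =>
      if hyp a.2 b.1.1 = b.1.2 then b.2 else b.2 + 1 := by
    have hp := Primrec.fst.comp (Primrec.snd (α := Sample × ℕ) (β := (ℕ × Bool) × ℕ))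
    have hn := Primrec.snd.comp (Primrec.snd (α := Sample × ℕ) (β := (ℕ × Bool) × ℕ))
    exact Primrec.ite (Primrec.eq.comp
      (primrec_hyp.comp (Primrec.snd.comp Primrec.fst) (Primrec.fst.comp hp))
      (Primrec.snd.comp hp)) hn (Primrec.succ.comp hn)
  refine (Primrec.list_foldr Primrec.fst (Primrec.const 0) h).of_eq fun ⟨S, c⟩ => ?_
  induction S with
  | nil => rfl
  | cons p S ih =>
    simp only [List.foldr_cons, errCount, List.countP_cons] at ih ⊢
    rw [ih]
    by_cases hh : hyp c p.1 = p.2 <;> simp [hh]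

lemma primrec_size : Primrec size := by
  have h : Primrec₂ fun (_ : Sample) (b : (ℕ × Bool) × ℕ) => b.2 + b.1.1 + 1 :=
    Primrec.succ.comp (Primrec.nat_add.comp (Primrec.snd.comp Primrec.snd)
      (Primrec.fst.comp (Primrec.fst.comp Primrec.snd)))
  exact Primrec.list_foldr Primrec.id (Primrec.const 0) h

lemma primrec_best : Primrec₂ best := by
  have hS := Primrec.fst (α := Sample) (β := ℕ × ℕ)
  have hc := Primrec.fst.comp (Primrec.snd (α := Sample) (β := ℕ × ℕ))
  have hb := Primrec.snd.comp (Primrec.snd (α := Sample) (β := ℕ × ℕ))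
  have h : Primrec₂ fun (S : Sample) (b : ℕ × ℕ) =>
      if errCount S b.1 < errCount S b.2 then b.1 else b.2 :=
    Primrec.ite (Primrec.nat_lt.comp (primrec_errCount.comp hS hc)
      (primrec_errCount.comp hS hb)) hc hb
  exact Primrec.nat_rec (Primrec.const 0) h

lemma computable_learner : ComputableLearner learner := by
  have hs := Primrec.succ.comp primrec_size
  have hN : Primrec fun S : Sample => (size S + 1) ^ 2 :=
    (Primrec.nat_mul.comp hs hs).of_eq fun a => by simp [sq]
  have hb := primrec_best.comp Primrec.id hN
  exact (primrec_hyp.comp (hb.comp Primrec.fst) Primrec.snd).to_comp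

lemma length_le_size (S : Sample) : S.length ≤ size S := by
  induction S with
  | nil => simp
  | cons p S ih =>
    have : size (p :: S) = size S + p.1 + 1 := rfl
    simp; omega

lemma le_size {S : Sample} {p : ℕ × Bool} (h : p ∈ S) : p.1 ≤ size S := by
  induction S with
  | nil => simp at h
  | cons q S ih =>
    have hq : size (q :: S) = size S + q.1 + 1 := rfl
    rcases List.mem_cons.1 h with rfl | h
    · omega
    · have := ih h; omega

lemma errCount_congr {S : Sample} {c c' : ℕ} (h : ∀ p ∈ S, hyp c p.1 = hyp c' p.1) :
    errCount S c = errCount S c' := by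
  refine List.countP_congr fun p hp => ?_
  rw [h p hp]

lemma sum_countP_le (S : Sample) (k n : ℕ) :
    ∑ j ∈ Finset.range n, S.countP (fun p => decide (p.1 = Nat.pair k j)) ≤ S.length := by
  induction S with
  | nil => simp
  | cons p S ih =>
    simp only [List.countP_cons, Finset.sum_add_distrib, List.length_cons, decide_eq_true_eq]
    refine add_le_add ih ?_
    rw [← Finset.card_filter, Finset.card_le_one]
    intro a ha b hb
    simp only [Finset.mem_filter] at ha hb
    have := ha.2.symm.trans hb.2
    simpa using (Nat.pair_eq_pair.1 this).2

/-- Pigeonhole: some point of the `k`-th block makes up at most a `1 / (k + 1)` share of `S`. -/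
lemma exists_rare (S : Sample) (k : ℕ) :
    ∃ j ≤ k, (k + 1) * S.countP (fun p => decide (p.1 = Nat.pair k j)) ≤ S.length := by
  by_contra! hcon
  have h1 : ∑ _j ∈ Finset.range (k + 1), S.length <
      ∑ j ∈ Finset.range (k + 1), (k + 1) * S.countP (fun p => decide (p.1 = Nat.pair k j)) :=
    Finset.sum_lt_sum_of_nonempty (by simp) fun j hj =>
      hcon j (by simpa [Nat.lt_succ_iff] using hj)
  rw [← Finset.mul_sum] at h1
  have h2 := Nat.mul_le_mul_left (k + 1) (sum_countP_le S k (k + 1))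
  simp only [Finset.sum_const, Finset.card_range, smul_eq_mul] at h1
  exact absurd h1 (not_lt.2 h2)

lemma hyp_eq_off {k t j : ℕ} (ht : Valid k t) (hkt : k < t) (hj : j ≤ k) {x : ℕ}
    (h1 : x ≠ Nat.pair k t) (h2 : x ≠ Nat.pair k j) :
    hyp (Nat.pair k j) x = hyp (Nat.pair k t) x := by
  obtain ⟨a, i, rfl⟩ : ∃ a i, x = Nat.pair a i := ⟨_, _, (Nat.pair_unpair x).symm⟩
  have hv : Valid k j := Or.inl hj
  rw [Bool.eq_iff_iff, hyp_eq_true, hyp_eq_true, hypRel_pair, hypRel_pair]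
  simp only [ht, hv, true_and]
  refine and_congr_right fun hak => ?_
  subst hak
  have h1' : i ≠ t := fun h => h1 (by rw [h])
  have h2' : i ≠ j := fun h => h2 (by rw [h])
  simp [h1', h2']

lemma hyp_zero (x : ℕ) : hyp (Nat.pair 0 0) x = false := by
  rw [Bool.eq_false_iff, Ne, hyp_eq_true, ← Nat.pair_unpair x, hypRel_pair]
  simp

lemma hyp_invalid {k t : ℕ} (h : ¬ Valid k t) (x : ℕ) : hyp (Nat.pair k t) x = false := by
  rw [Bool.eq_false_iff, Ne, hyp_eq_true, ← Nat.pair_unpair x, hypRel_pair]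
  simp [h]

/-- If the marker `(k, t)` does not occur in `S`, then deleting the point `(k, j)` from the block
instead of adding the marker costs at most the occurrences of `(k, j)`. -/
lemma errCount_missing_le (S : Sample) {k t j : ℕ} (ht : Valid k t) (hkt : k < t) (hj : j ≤ k)
    (hS : ∀ p ∈ S, p.1 ≠ Nat.pair k t) :
    errCount S (Nat.pair k j) ≤
      errCount S (Nat.pair k t) + S.countP (fun p => decide (p.1 = Nat.pair k j)) := by
  induction S with
  | nil => simp [errCount]
  | cons p S ih =>
    have ih' := ih fun q hq => hS q (List.mem_cons_of_mem _ hq)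
    simp only [errCount, List.countP_cons] at ih' ⊢
    by_cases hp : p.1 = Nat.pair k j
    · simp only [decide_eq_true_eq, if_pos hp]
      split_ifs <;> omega
    · rw [hyp_eq_off ht hkt hj (hS p List.mem_cons_self) hp]
      split_ifs <;> omega

/-- The learner is an asymptotic empirical risk minimizer: on long samples its number of mistakes
exceeds the least one by at most `|S| / q`. The threshold `m₀` bounds the halting times of the
programs `k < q`, so it is not computable in `q`. -/
lemma asymptotic_erm (q : ℕ) : ∃ m₀, ∀ S : Sample, m₀ ≤ S.length → ∀ c,
    q * errCount S (best S ((size S + 1) ^ 2)) ≤ q * errCount S c + S.length := by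
  classical
  -- a bound for all certificates of blocks `k < q`; there is at most one for each block
  let T : ℕ → ℕ := fun k => if h : ∃ t, k < t ∧ Valid k t then h.choose else 0
  have hT : ∀ k t, k < t → Valid k t → t = T k := by
    intro k t hkt hv
    have hex : ∃ t, k < t ∧ Valid k t := ⟨t, hkt, hv⟩
    have hTk : T k = hex.choose := dif_pos hex
    obtain ⟨h1, h2⟩ := hex.choose_spec
    rw [← hTk] at h1 h2
    have e1 := hv.resolve_left (by omega)
    have e2 := h2.resolve_left (by omega)
    have := e1.unique e2
    omega
  refine ⟨∑ k ∈ Finset.range q, (k + T k), fun S hS c => ?_⟩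
  have hlen := length_le_size S
  suffices h : ∃ c' < (size S + 1) ^ 2, q * errCount S c' ≤ q * errCount S c + S.length by
    obtain ⟨c', hlt, hc'⟩ := h
    exact (Nat.mul_le_mul_left q (best_le S hlt)).trans hc'
  obtain ⟨k, t, rfl⟩ : ∃ k t, c = Nat.pair k t := ⟨_, _, (Nat.pair_unpair c).symm⟩
  have hself : k ≤ size S → t ≤ size S → ∃ c' < (size S + 1) ^ 2,
      q * errCount S c' ≤ q * errCount S (Nat.pair k t) + S.length := fun h1 h2 =>
    ⟨_, pair_lt_sq h1 h2, by omega⟩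
  -- a hypothesis vanishing on the sample is as good as `∅`
  by_cases hz : ∀ p ∈ S, hyp (Nat.pair k t) p.1 = false
  · refine ⟨Nat.pair 0 0, pair_lt_sq (by omega) (by omega), ?_⟩
    rw [errCount_congr (c := Nat.pair 0 0) (c' := Nat.pair k t)
      fun p hp => by rw [hyp_zero, hz p hp]]
    omega
  push Not at hz
  obtain ⟨p, hp, hne⟩ := hz
  have hrel : HypRel (Nat.pair k t) p.1 := hyp_eq_true.1 (by simpa using hne)
  have hpk : p.1.unpair.1 = k := by simpa using hrel.2.1
  have hv : Valid k t := by simpa using hrel.1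
  have hk : k ≤ size S := by
    rw [← hpk]; exact (Nat.unpair_left_le _).trans (le_size hp)
  by_cases htk : t ≤ k
  · exact hself hk (htk.trans hk)
  push Not at htk
  by_cases hkq : k < q
  · have h1 := Finset.single_le_sum (f := fun k => k + T k) (fun _ _ => Nat.zero_le _)
      (Finset.mem_range.2 hkq)
    have h2 := hT k t htk hv
    exact hself hk (by omega)
  push Not at hkq
  by_cases hmark : ∃ p ∈ S, p.1 = Nat.pair k t
  · obtain ⟨p', hp', he⟩ := hmark
    have := le_size hp'
    have := Nat.right_le_pair k t
    exact hself hk (by omega)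
  push Not at hmark
  -- a large block with unseen marker is replaced by the block without a rare point
  obtain ⟨j, hj, hrare⟩ := exists_rare S k
  refine ⟨Nat.pair k j, pair_lt_sq hk (hj.trans hk), ?_⟩
  have h1 := Nat.mul_le_mul_left q (errCount_missing_le S hv htk hj hmark)
  have h2 := Nat.mul_le_mul_right (S.countP (fun p => decide (p.1 = Nat.pair k j)))
    (show q ≤ k + 1 by omega)
  rw [mul_add] at h1
  omega


/-! ### Lower bound -/

/-- A list of all samples of size `m` consisting of points of the `k`-th block with label `1`. -/
def blockSamples (k m : ℕ) : List Sample :=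
  Nat.rec [[]] (fun _ L => L.flatMap fun S =>
    (List.range (k + 1)).map fun i => (Nat.pair k i, true) :: S) m

lemma mem_blockSamples {k m : ℕ} {S : Sample} (hl : S.length = m)
    (hS : ∀ p ∈ S, ∃ i ≤ k, p = (Nat.pair k i, true)) : S ∈ blockSamples k m := by
  induction m generalizing S with
  | zero => simp [List.length_eq_zero_iff.1 hl, blockSamples]
  | succ m ih =>
    obtain ⟨p, S, rfl⟩ := List.exists_cons_of_length_eq_add_one hl
    have hdef : blockSamples k (m + 1) = (blockSamples k m).flatMap fun S =>
      (List.range (k + 1)).map fun i => (Nat.pair k i, true) :: S := rfl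
    rw [hdef, List.mem_flatMap]
    obtain ⟨i, hi, rfl⟩ := hS p List.mem_cons_self
    refine ⟨S, ih (by simpa using hl) fun q hq => hS q (List.mem_cons_of_mem _ hq), ?_⟩
    exact List.mem_map.2 ⟨i, by simpa [Nat.lt_succ_iff] using hi, rfl⟩

lemma primrec_blockSamples : Primrec₂ blockSamples := by
  have h : Primrec₂ fun (k : ℕ) (b : ℕ × List Sample) => b.2.flatMap fun S =>
      (List.range (k + 1)).map fun i => (Nat.pair k i, true) :: S := by
    have hk : Primrec fun a : (ℕ × (ℕ × List Sample)) × Sample => a.1.1 :=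
      Primrec.fst.comp Primrec.fst
    have h1 : Primrec₂ fun (a : (ℕ × (ℕ × List Sample)) × Sample) (i : ℕ) =>
        (Nat.pair a.1.1 i, true) :: a.2 :=
      Primrec.list_cons.comp
        (Primrec.pair (Primrec₂.natPair.comp (hk.comp Primrec.fst) Primrec.snd)
          (Primrec.const true)) (Primrec.snd.comp Primrec.fst)
    have h2 : Primrec₂ fun (a : ℕ × (ℕ × List Sample)) (S : Sample) =>
        (List.range (a.1 + 1)).map fun i => (Nat.pair a.1 i, true) :: S :=
      Primrec.list_map (Primrec.list_range.comp (Primrec.succ.comp hk)) h1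
    exact Primrec.list_flatMap (Primrec.snd.comp Primrec.snd) h2
  exact Primrec.nat_rec (Primrec.const [[]]) h

lemma exists_computable_bounded_exists {α : Type*} [Primcodable α] {b : α → ℕ} {P : α → ℕ → Bool}
    (hb : Computable b) (hP : Computable₂ P) :
    ∃ f : α → Bool, Computable f ∧ ∀ a, f a = true ↔ ∃ e < b a, P a e = true := by
  have h : Computable₂ fun (a : α) (y : ℕ × Bool) => P a y.1 || y.2 :=
    Primrec.or.to_comp.comp (hP.comp Computable.fst (Computable.fst.comp Computable.snd))
      (Computable.snd.comp Computable.snd)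
  refine ⟨_, Computable.nat_rec hb (Computable.const false) h, fun a => ?_⟩
  induction b a with
  | zero => simp
  | succ n ih =>
    simp only [Bool.or_eq_true, ih, Nat.lt_succ_iff_lt_or_eq]
    constructor
    · rintro (h | ⟨e, he, h⟩)
      · exact ⟨n, Or.inr rfl, h⟩
      · exact ⟨e, Or.inl he, h⟩
    · rintro ⟨e, he | rfl, h⟩
      · exact Or.inr ⟨e, he, h⟩
      · exact Or.inl h

/-- A hypothesis of the class containing the whole `k`-th block carries the halting time of
program `k`. -/
lemma exists_cert_of_block {k : ℕ} {h : Hyp} (hh : h ∈ blockClass)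
    (hk : ∀ i ≤ k, h (Nat.pair k i) = true) : ∃ s, Cert k s := by
  obtain ⟨c, rfl⟩ := hh
  have h0 := hyp_eq_true.1 (hk 0 (Nat.zero_le k))
  have hck : k = c.unpair.1 := by simpa using h0.2.1
  rcases h0.1 with hv | hv
  · have h1 := (hyp_eq_true.1 (hk c.unpair.2 (by omega))).2.2
    rw [Nat.unpair_pair] at h1
    exact absurd (iff_of_true hv rfl) h1
  · exact ⟨_, hck ▸ hv⟩

/-- The uniform distribution on the `k`-th block, with all labels equal to `1`. -/
noncomputable def blockPMF (k : ℕ) : PMF (ℕ × Bool) :=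
  (PMF.uniformOfFinset (Finset.range (k + 1)) (by simp)).map fun i => (Nat.pair k i, true)

lemma genError_blockPMF (k : ℕ) (h : Hyp) : genError (blockPMF k) h =
    (PMF.uniformOfFinset (Finset.range (k + 1)) (by simp)).toOuterMeasure
      {i | h (Nat.pair k i) ≠ true} := by
  rw [genError, blockPMF, PMF.toOuterMeasure_map_apply]
  rfl

lemma of_iidPMF_ne_zero {D : PMF (ℕ × Bool)} {m : ℕ} {S : Sample} (h : iidPMF D m S ≠ 0) :
    S.length = m ∧ ∀ p ∈ S, D p ≠ 0 := by
  induction m generalizing S with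
  | zero =>
    have : S = [] := by simpa [iidPMF] using h
    simp [this]
  | succ m ih =>
    rw [iidPMF, ← PMF.mem_support_iff, PMF.mem_support_bind_iff] at h
    obtain ⟨p, hp, h⟩ := h
    rw [PMF.mem_support_map_iff] at h
    obtain ⟨S', hS', rfl⟩ := h
    obtain ⟨h1, h2⟩ := ih hS'
    exact ⟨by simp [h1], List.forall_mem_cons.2 ⟨hp, h2⟩⟩

/-- If program `k` halts, then the full block is available in the class, and at accuracy
`1 / (k + 2)`, which is below the mass `1 / (k + 1)` of a point, the learner has to output a
hypothesis containing the full block on at least one sample. -/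
lemma exists_blockSample {A : Learner} {k m s : ℕ} (hs : Cert k s)
    (hA : PACCondition A blockClass (k + 2) m) :
    ∃ S ∈ blockSamples k m, ∀ i ≤ k, A S (Nat.pair k i) = true := by
  have hpos : 0 < 1 - (((k + 2 : ℕ) : ℝ≥0∞))⁻¹ := by
    rw [tsub_pos_iff_lt, ENNReal.inv_lt_one]
    exact_mod_cast (by omega : 1 < k + 2)
  have hpr := hpos.trans_le (hA (blockPMF k))
  have hne := mt ((iidPMF (blockPMF k) m).toOuterMeasure_apply_eq_zero_iff _).2 hpr.ne'
  obtain ⟨S, hsupp, hS⟩ := Set.not_disjoint_iff.1 hne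
  obtain ⟨hl, hD⟩ := of_iidPMF_ne_zero ((PMF.mem_support_iff _ _).1 hsupp)
  refine ⟨S, mem_blockSamples hl fun p hp => ?_, ?_⟩
  · have := (PMF.mem_support_iff _ _).2 (hD p hp)
    rw [blockPMF, PMF.mem_support_map_iff] at this
    obtain ⟨i, hi, rfl⟩ := this
    rw [PMF.mem_support_uniformOfFinset_iff, Finset.mem_range] at hi
    exact ⟨i, by omega, rfl⟩
  · by_contra! hcon
    obtain ⟨i, hi, hAi⟩ := hcon
    have hinf : (⨅ h ∈ blockClass, genError (blockPMF k) h) = 0 := by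
      refine le_antisymm ?_ bot_le
      refine (iInf₂_le (hyp (Nat.pair k (k + 1 + s))) ⟨_, rfl⟩).trans ?_
      rw [genError_blockPMF, nonpos_iff_eq_zero, PMF.toOuterMeasure_apply_eq_zero_iff,
        Set.disjoint_left]
      intro j hj hne
      rw [PMF.mem_support_uniformOfFinset_iff, Finset.mem_range] at hj
      refine hne (hyp_eq_true.2 (hypRel_pair.2 ⟨Or.inr (by simpa using hs), rfl, ?_⟩))
      intro h
      have := h.1 (by omega)
      omega
    have hle : genError (blockPMF k) (A S) ≤ ((k + 2 : ℕ) : ℝ≥0∞)⁻¹ := by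
      have : genError (blockPMF k) (A S) ≤ _ := hS
      rwa [hinf, zero_add] at this
    have hge : ((k + 1 : ℕ) : ℝ≥0∞)⁻¹ ≤ genError (blockPMF k) (A S) := by
      rw [genError_blockPMF]
      have h1 : (PMF.uniformOfFinset (Finset.range (k + 1)) (by simp)) i =
          ((k + 1 : ℕ) : ℝ≥0∞)⁻¹ := by
        rw [PMF.uniformOfFinset_apply_of_mem _ (by simpa [Nat.lt_succ_iff] using hi)]
        simp
      rw [← h1, ← PMF.toOuterMeasure_apply_singleton]
      exact MeasureTheory.measure_mono (by simpa using hAi)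
    have := hge.trans hle
    rw [ENNReal.inv_le_inv] at this
    have : k + 2 ≤ k + 1 := by exact_mod_cast this
    omega

/-- With a computable bound on the sample complexity, the samples in `exists_blockSample` form a
computable finite list, and running the learner on all of them decides the halting problem. -/
lemma not_properlySCPAC : ¬ ProperlySCPACLearnable blockClass := by
  rintro ⟨A, hAc, hAp, hA, g, hg, hbound⟩
  have hPAC : ∀ n, PACCondition A blockClass n (g n) := fun n =>
    Nat.sInf_mem (s := {m₀ | ∀ m ≥ m₀, PACCondition A blockClass n m}) (hA n) _ (hbound n)
  have hL : Computable fun k => blockSamples k (g (k + 2)) :=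
    primrec_blockSamples.to_comp.comp Computable.id
      (hg.comp (Computable.succ.comp Computable.succ))
  have hS : Computable fun a : ℕ × ℕ => (blockSamples a.1 (g (a.1 + 2))).getD a.2 [] :=
    (Primrec.list_getD []).to_comp.comp (hL.comp Computable.fst) Computable.snd
  -- `f₁ (k, e)`: on the `e`-th sample the learner misses a point of the `k`-th block
  obtain ⟨f₁, hf₁, hf₁'⟩ := exists_computable_bounded_exists (α := ℕ × ℕ)
    (b := fun a => a.1 + 1)
    (P := fun a i => !(A ((blockSamples a.1 (g (a.1 + 2))).getD a.2 []) (Nat.pair a.1 i)))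
    (Computable.succ.comp Computable.fst)
    (Primrec.not.to_comp.comp (hAc.comp (hS.comp Computable.fst)
      (Primrec₂.natPair.to_comp.comp (Computable.fst.comp Computable.fst) Computable.snd)))
  obtain ⟨f₂, hf₂, hf₂'⟩ := exists_computable_bounded_exists (α := ℕ)
    (b := fun k => (blockSamples k (g (k + 2))).length)
    (P := fun k e => !(f₁ (k, e)))
    (Computable.list_length.comp hL) (Primrec.not.to_comp.comp hf₁)
  refine not_computable_cert (ComputablePred.computable_iff.2 ⟨f₂, hf₂, ?_⟩)
  funext k
  rw [eq_iff_iff, hf₂']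
  have key : ∀ e, (!(f₁ (k, e))) = true ↔
      ∀ i ≤ k, A ((blockSamples k (g (k + 2))).getD e []) (Nat.pair k i) = true := by
    intro e
    rw [Bool.not_eq_true', ← Bool.not_eq_true, hf₁']
    simp [Nat.lt_succ_iff]
  simp only [key]
  constructor
  · rintro ⟨s, hs⟩
    obtain ⟨S, hS, h⟩ := exists_blockSample hs (hPAC (k + 2))
    obtain ⟨e, he, rfl⟩ := List.getElem_of_mem hS
    exact ⟨e, he, by rwa [List.getD_eq_getElem _ _ he]⟩
  · rintro ⟨e, -, h⟩
    exact exists_cert_of_block (hAp _) h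


/-! ### Uniform convergence -/

open MeasureTheory

/-- The space `ℓ²` with one coordinate for the label, one for each block and one for each point. -/
abbrev FeatureSpace : Type := lp (fun _ : Option (ℕ ⊕ ℕ) => ℝ) 2

/-- The sign with `[h(x) ≠ y] = [y = 1] + sgn y · h(x)`. -/
noncomputable def sgn (b : Bool) : ℝ := if b then -1 else 1

/-- The feature vector of a labeled example: its label, and its signed block and point
indicators. -/
noncomputable def feature (p : ℕ × Bool) : FeatureSpace :=
  lp.single 2 none (if p.2 then 1 else 0) +
    lp.single 2 (some (Sum.inl p.1.unpair.1))
      (if p.1.unpair.2 ≤ p.1.unpair.1 then sgn p.2 else 0) +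
    lp.single 2 (some (Sum.inr p.1)) (sgn p.2)

open Classical in
/-- The vector representing the 0-1 loss of `hyp c` as a linear functional of the features. -/
noncomputable def weight (c : ℕ) : FeatureSpace :=
  if Valid c.unpair.1 c.unpair.2 then
    lp.single 2 none 1 + lp.single 2 (some (Sum.inl c.unpair.1)) 1 +
      lp.single 2 (some (Sum.inr c)) (if c.unpair.2 ≤ c.unpair.1 then -1 else 1)
  else lp.single 2 none 1

lemma norm_single_le (i : Option (ℕ ⊕ ℕ)) {a : ℝ} (ha : |a| ≤ 1) :
    ‖(lp.single 2 i a : FeatureSpace)‖ ≤ 1 := by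
  rw [lp.norm_single (by norm_num)]
  exact ha

lemma norm_feature_le (p : ℕ × Bool) : ‖feature p‖ ≤ 3 := by
  have h1 := norm_single_le none (a := if p.2 then 1 else 0) (by split_ifs <;> simp)
  have h2 := norm_single_le (some (Sum.inl p.1.unpair.1))
    (a := if p.1.unpair.2 ≤ p.1.unpair.1 then sgn p.2 else 0)
    (by unfold sgn; split_ifs <;> simp)
  have h3 := norm_single_le (some (Sum.inr p.1)) (a := sgn p.2)
    (by unfold sgn; split_ifs <;> simp)
  exact (norm_add₃_le).trans (by linarith)

lemma norm_weight_le (c : ℕ) : ‖weight c‖ ≤ 3 := by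
  have h1 := norm_single_le none (a := 1) (by simp)
  have h2 := norm_single_le (some (Sum.inl c.unpair.1)) (a := 1) (by simp)
  have h3 := norm_single_le (some (Sum.inr c))
    (a := if c.unpair.2 ≤ c.unpair.1 then -1 else 1) (by split_ifs <;> simp)
  unfold weight
  split_ifs at h3 ⊢
  all_goals first | exact (norm_add₃_le).trans (by linarith) | linarith

lemma inner_weight_feature (c : ℕ) (p : ℕ × Bool) :
    inner ℝ (weight c) (feature p) = if hyp c p.1 != p.2 then (1 : ℝ) else 0 := by
  obtain ⟨x, y⟩ := p
  obtain ⟨a, i, rfl⟩ : ∃ a i, x = Nat.pair a i := ⟨_, _, (Nat.pair_unpair x).symm⟩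
  obtain ⟨k, t, rfl⟩ : ∃ k t, c = Nat.pair k t := ⟨_, _, (Nat.pair_unpair c).symm⟩
  have hrel : hyp (Nat.pair k t) (Nat.pair a i) = true ↔
      Valid k t ∧ a = k ∧ ¬ (i ≤ k ↔ i = t) := by rw [hyp_eq_true, hypRel_pair]
  by_cases hv : Valid k t
  · simp only [weight, Nat.unpair_pair, hv, if_true, inner_add_left, lp.inner_single_left,
      feature, lp.coeFn_add, Pi.add_apply, lp.single_apply, Pi.single_apply]
    simp only [hv, true_and] at hrel
    by_cases hak : a = k
    · subst hak
      by_cases h1 : i ≤ a <;> by_cases h2 : i = t <;> cases y <;>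
        cases hh : hyp (Nat.pair a t) (Nat.pair a i) <;>
        simp_all [sgn] <;> grind
    · have h : hyp (Nat.pair k t) (Nat.pair a i) = false := by
        rw [Bool.eq_false_iff, Ne, hrel]; tauto
      have h' : ¬ (Nat.pair k t = Nat.pair a i) := fun h => hak (Nat.pair_eq_pair.1 h).1.symm
      rw [h]
      cases y <;> simp [Ne.symm hak, h']
  · simp only [weight, Nat.unpair_pair, hv, if_false, lp.inner_single_left,
      feature, lp.coeFn_add, Pi.add_apply, lp.single_apply, Pi.single_apply]
    rw [hyp_invalid hv]
    cases y <;> simp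


lemma tsum_bind_mul {α β : Type*} (p : PMF α) (f : α → PMF β) (g : β → ℝ≥0∞) :
    ∑' b, p.bind f b * g b = ∑' a, p a * ∑' b, f a b * g b := by
  simp only [PMF.bind_apply, ← ENNReal.tsum_mul_right, ← ENNReal.tsum_mul_left]
  rw [ENNReal.tsum_comm]
  simp only [mul_assoc]

lemma tsum_map_mul {α β : Type*} (p : PMF α) (f : α → β) (g : β → ℝ≥0∞) :
    ∑' b, p.map f b * g b = ∑' a, p a * g (f a) := by
  classical
  rw [PMF.map, tsum_bind_mul]
  refine tsum_congr fun a => ?_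
  rw [tsum_eq_single (f a) fun b hb => by simp [PMF.pure_apply, hb]]
  simp

lemma tsum_iidPMF_succ (D : PMF (ℕ × Bool)) (m : ℕ) (F : Sample → ℝ≥0∞) :
    ∑' S, iidPMF D (m + 1) S * F S = ∑' S, iidPMF D m S * ∑' p, D p * F (p :: S) := by
  rw [iidPMF, tsum_bind_mul]
  simp only [tsum_map_mul, ← ENNReal.tsum_mul_left]
  rw [ENNReal.tsum_comm]
  refine tsum_congr fun S => tsum_congr fun p => by ring

/-- The expected feature vector. -/
noncomputable def mean (D : PMF (ℕ × Bool)) : FeatureSpace := ∫ p, feature p ∂D.toMeasure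

/-- `|S|` times the difference of the empirical and the true mean of the features. -/
noncomputable def deviation (D : PMF (ℕ × Bool)) (S : Sample) : FeatureSpace :=
  (S.map fun p => feature p - mean D).sum

lemma integrable_of_norm_le {F : Type*} [NormedAddCommGroup F] (D : PMF (ℕ × Bool))
    {f : ℕ × Bool → F} {C : ℝ} (hf : ∀ p, ‖f p‖ ≤ C) : Integrable f D.toMeasure :=
  Integrable.of_bound (StronglyMeasurable.of_discrete).aestronglyMeasurable C
    (Filter.Eventually.of_forall hf)

lemma norm_mean_le (D : PMF (ℕ × Bool)) : ‖mean D‖ ≤ 3 := by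
  refine (norm_integral_le_of_norm_le_const (C := 3)
    (Filter.Eventually.of_forall norm_feature_le)).trans (by simp)

lemma tsum_mul_eq_lintegral (D : PMF (ℕ × Bool)) (f : ℕ × Bool → ℝ≥0∞) :
    ∑' p, D p * f p = ∫⁻ p, f p ∂D.toMeasure := by
  rw [lintegral_countable']
  refine tsum_congr fun p => ?_
  rw [PMF.toMeasure_apply_singleton _ _ (measurableSet_singleton p), mul_comm]

/-- Adding an independent centered vector of norm at most `6` increases the expected squared norm
by at most `36`. -/
lemma step_le (D : PMF (ℕ × Bool)) (z : FeatureSpace) :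
    ∑' p, D p * ENNReal.ofReal (‖z + (feature p - mean D)‖ ^ 2) ≤
      ENNReal.ofReal (‖z‖ ^ 2) + 36 := by
  have hb : ∀ p, ‖feature p - mean D‖ ≤ 6 := fun p =>
    (norm_sub_le _ _).trans (by linarith [norm_feature_le p, norm_mean_le D])
  have hfi : Integrable feature D.toMeasure := integrable_of_norm_le D norm_feature_le
  have hui : Integrable (fun p => feature p - mean D) D.toMeasure := integrable_of_norm_le D hb
  have hu : ∫ p, (feature p - mean D) ∂D.toMeasure = 0 := by
    rw [integral_sub hfi (integrable_const _)]
    simp [mean]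
  have hsq : ∀ p, ‖feature p - mean D‖ ^ 2 ≤ 36 := fun p => by
    nlinarith [hb p, norm_nonneg (feature p - mean D)]
  have hsqi : Integrable (fun p => ‖feature p - mean D‖ ^ 2) D.toMeasure :=
    integrable_of_norm_le D (C := 36) fun p => by
      rw [Real.norm_of_nonneg (by positivity)]; exact hsq p
  have hii : Integrable (fun p => 2 * inner ℝ z (feature p - mean D)) D.toMeasure :=
    (hui.const_inner z).const_mul 2
  have hexp : ∀ p, ‖z + (feature p - mean D)‖ ^ 2 =
      (‖z‖ ^ 2 + 2 * inner ℝ z (feature p - mean D)) + ‖feature p - mean D‖ ^ 2 := fun p =>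
    norm_add_sq_real _ _
  have hint : Integrable (fun p => ‖z + (feature p - mean D)‖ ^ 2) D.toMeasure := by
    simp only [hexp]
    exact ((integrable_const _).add hii).add hsqi
  rw [tsum_mul_eq_lintegral, ← ofReal_integral_eq_lintegral_ofReal hint
    (Filter.Eventually.of_forall fun p => by positivity)]
  have h36 : (36 : ℝ≥0∞) = ENNReal.ofReal 36 := by simp
  rw [h36, ← ENNReal.ofReal_add (by positivity) (by norm_num)]
  refine ENNReal.ofReal_le_ofReal ?_
  have hle : ∫ p, ‖feature p - mean D‖ ^ 2 ∂D.toMeasure ≤ 36 := by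
    refine (integral_mono hsqi (integrable_const 36) hsq).trans (by simp)
  simp only [hexp]
  have hci : Integrable (fun p => ‖z‖ ^ 2 + 2 * inner ℝ z (feature p - mean D)) D.toMeasure :=
    (integrable_const _).add hii
  rw [integral_add hci hsqi, integral_add (integrable_const _) hii,
    integral_const_mul, integral_inner hui, hu]
  simpa using hle

lemma secondMoment_le (D : PMF (ℕ × Bool)) (m : ℕ) :
    ∑' S, iidPMF D m S * ENNReal.ofReal (‖deviation D S‖ ^ 2) ≤ 36 * m := by
  induction m with
  | zero =>
    simp only [iidPMF]
    rw [ENNReal.tsum_eq_zero.2]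
    · simp
    · intro S
      by_cases h : S = []
      · simp [h, deviation]
      · simp [PMF.pure_apply, h]
  | succ m ih =>
    rw [tsum_iidPMF_succ]
    have hcons : ∀ S p, deviation D (p :: S) = deviation D S + (feature p - mean D) :=
      fun S p => by simp [deviation, add_comm]
    simp only [hcons]
    calc ∑' S, iidPMF D m S *
          ∑' p, D p * ENNReal.ofReal (‖deviation D S + (feature p - mean D)‖ ^ 2)
        ≤ ∑' S, (iidPMF D m S * ENNReal.ofReal (‖deviation D S‖ ^ 2) + iidPMF D m S * 36) :=
          ENNReal.tsum_le_tsum fun S => by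
            rw [← mul_add]
            exact mul_le_mul_right (step_le D _) _
      _ = ∑' S, iidPMF D m S * ENNReal.ofReal (‖deviation D S‖ ^ 2) + 36 := by
          rw [ENNReal.tsum_add, ENNReal.tsum_mul_right, PMF.tsum_coe, one_mul]
      _ ≤ 36 * m + 36 := by gcongr
      _ = 36 * ((m + 1 : ℕ) : ℝ≥0∞) := by push_cast; ring

lemma genError_hyp (D : PMF (ℕ × Bool)) (c : ℕ) :
    genError D (hyp c) = ENNReal.ofReal (inner ℝ (weight c) (mean D)) := by
  have hfi : Integrable feature D.toMeasure := integrable_of_norm_le D norm_feature_le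
  rw [genError, ← PMF.toMeasure_apply_eq_toOuterMeasure, mean, ← integral_inner hfi]
  simp only [inner_weight_feature]
  have : (fun p : ℕ × Bool => if (hyp c p.1 != p.2) = true then (1 : ℝ) else 0) =
      Set.indicator {p | hyp c p.1 ≠ p.2} 1 := by
    funext p
    simp [Set.indicator_apply]
  rw [this, integral_indicator_one (MeasurableSet.of_discrete), ofReal_measureReal]

lemma inner_weight_deviation (D : PMF (ℕ × Bool)) (c : ℕ) (S : Sample) :
    inner ℝ (weight c) (deviation D S) =
      (errCount S c : ℝ) - S.length * inner ℝ (weight c) (mean D) := by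
  induction S with
  | nil => simp [deviation, errCount]
  | cons p S ih =>
    have hcons : deviation D (p :: S) = (feature p - mean D) + deviation D S := by
      simp [deviation]
    rw [hcons, inner_add_right, ih, inner_sub_right, inner_weight_feature, errCount, errCount,
      List.countP_cons]
    push_cast
    simp only [List.length_cons]
    push_cast
    split_ifs <;> ring

/-- The deviation of the features controls the difference of empirical and true error, uniformly
in the hypothesis. -/
lemma abs_sub_le_deviation (D : PMF (ℕ × Bool)) (c : ℕ) (S : Sample) :
    |(errCount S c : ℝ) - S.length * inner ℝ (weight c) (mean D)| ≤ 3 * ‖deviation D S‖ := by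
  rw [← inner_weight_deviation]
  exact (abs_real_inner_le_norm _ _).trans
    (mul_le_mul_of_nonneg_right (norm_weight_le c) (norm_nonneg _))

/-- Markov's inequality for the squared deviation. -/
lemma samplePr_deviation_le (D : PMF (ℕ × Bool)) (m : ℕ) {a : ℝ≥0∞} :
    a * samplePr D m {S | a ≤ ENNReal.ofReal (‖deviation D S‖ ^ 2)} ≤ 36 * m := by
  refine le_trans ?_ (secondMoment_le D m)
  rw [samplePr, PMF.toOuterMeasure_apply, ← ENNReal.tsum_mul_left]
  refine ENNReal.tsum_le_tsum fun S => ?_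
  by_cases hS : a ≤ ENNReal.ofReal (‖deviation D S‖ ^ 2)
  · rw [Set.indicator_of_mem (by exact hS), mul_comm]
    exact mul_le_mul_right hS _
  · rw [Set.indicator_of_notMem (by exact hS)]
    simp

lemma one_le_samplePr_add (D : PMF (ℕ × Bool)) (m : ℕ) (E F : Set Sample)
    (h : ∀ S, S.length = m → S ∉ F → S ∈ E) : 1 ≤ samplePr D m E + samplePr D m F := by
  rw [samplePr, samplePr, ← PMF.tsum_coe (iidPMF D m), PMF.toOuterMeasure_apply,
    PMF.toOuterMeasure_apply, ← ENNReal.tsum_add]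
  refine ENNReal.tsum_le_tsum fun S => ?_
  by_cases h0 : iidPMF D m S = 0
  · simp [h0]
  by_cases hF : S ∈ F
  · rw [Set.indicator_of_mem hF]; exact le_add_self
  · rw [Set.indicator_of_mem (h S (of_iidPMF_ne_zero h0).1 hF)]; exact le_self_add

lemma pacLearns : PACLearns learner blockClass := by
  intro n
  rcases Nat.eq_zero_or_pos n with rfl | hn
  · exact ⟨0, fun m _ D => by simp⟩
  obtain ⟨m₀, hm₀⟩ := asymptotic_erm (3 * n)
  refine ⟨m₀ + 36 * 81 * n ^ 3, fun m hm D => ?_⟩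
  have hnR : (0 : ℝ) < n := by exact_mod_cast hn
  have hn3 : 0 < n ^ 3 := by positivity
  have hmpos : 0 < m := by omega
  have hmR : (0 : ℝ) < m := by exact_mod_cast hmpos
  -- Deviation below `m / (9 n)` makes empirical and true errors `1 / (3 n)`-close; this error is
  -- incurred twice, and a third `1 / (3 n)` comes from `asymptotic_erm`.
  set r : ℝ := m / (9 * n) with hr
  have hrpos : 0 < r := by positivity
  have hbad : samplePr D m {S | ENNReal.ofReal (r ^ 2) ≤ ENNReal.ofReal (‖deviation D S‖ ^ 2)} ≤
      (n : ℝ≥0∞)⁻¹ := by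
    have h1 := samplePr_deviation_le D m (a := ENNReal.ofReal (r ^ 2))
    have hr2 : 36 * (m : ℝ) * n ≤ r ^ 2 := by
      rw [hr, div_pow, le_div_iff₀ (by positivity)]
      have : (36 * 81 * n ^ 3 : ℝ) ≤ m := by
        exact_mod_cast (by omega : 36 * 81 * n ^ 3 ≤ m)
      nlinarith
    have h2 : (36 * m : ℝ≥0∞) * n ≤ ENNReal.ofReal (r ^ 2) := by
      refine le_trans (le_of_eq ?_) (ENNReal.ofReal_le_ofReal hr2)
      rw [ENNReal.ofReal_mul (by positivity), ENNReal.ofReal_mul (by norm_num)]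
      simp
    have h3 := (mul_le_mul_left h2 _).trans h1
    rw [mul_assoc] at h3
    have h36 : (36 * m : ℝ≥0∞) ≠ 0 := by
      simp [hmpos.ne']
    have h36' : (36 * m : ℝ≥0∞) ≠ ⊤ := ENNReal.mul_ne_top (by simp) (by simp)
    rw [ENNReal.le_inv_iff_mul_le, mul_comm]
    rw [← ENNReal.mul_le_mul_iff_right h36 h36', mul_one]
    exact h3
  have hgood := one_le_samplePr_add D m
    {S | genError D (learner S) ≤ (⨅ h ∈ blockClass, genError D h) + ((n : ℝ≥0∞))⁻¹}
    {S | ENNReal.ofReal (r ^ 2) ≤ ENNReal.ofReal (‖deviation D S‖ ^ 2)} ?_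
  · exact tsub_le_iff_right.2 (hgood.trans (add_le_add le_rfl hbad))
  intro S hl hS
  have hdev : ‖deviation D S‖ < r := by
    by_contra! hcon
    exact hS (ENNReal.ofReal_le_ofReal (pow_le_pow_left₀ hrpos.le hcon 2))
  rw [Set.mem_ofPred_eq, ← tsub_le_iff_right]
  refine le_iInf₂ ?_
  rintro h ⟨c, rfl⟩
  rw [tsub_le_iff_right]
  set b := best S ((size S + 1) ^ 2) with hb
  have hlearn : learner S = hyp b := rfl
  have hinv : ((n : ℝ≥0∞))⁻¹ = ENNReal.ofReal ((n : ℝ)⁻¹) := by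
    rw [ENNReal.ofReal_inv_of_pos hnR, ENNReal.ofReal_natCast]
  rw [hlearn, genError_hyp, genError_hyp, hinv]
  refine le_trans (ENNReal.ofReal_le_ofReal ?_) ENNReal.ofReal_add_le
  have e1 := abs_le.1 (abs_sub_le_deviation D b S)
  have e2 := abs_le.1 (abs_sub_le_deviation D c S)
  have e3 := hm₀ S (by omega) c
  rw [← hb] at e3
  rw [hl] at e1 e2 e3
  have e4 : (3 * n : ℝ) * errCount S b ≤ 3 * n * errCount S c + m := by exact_mod_cast e3
  have e5 : 9 * n * r = m := by rw [hr]; field_simp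
  set x := inner ℝ (weight b) (mean D)
  set y := inner ℝ (weight c) (mean D)
  have e6 : m * x * (3 * n) ≤ (m * y + m / n) * (3 * n) := by
    have : (m / n : ℝ) * (3 * n) = 3 * m := by field_simp
    rw [add_mul, this]
    nlinarith [mul_lt_mul_of_pos_left hdev hnR]
  have e7 := le_of_mul_le_mul_right e6 (by positivity)
  have e8 : (m : ℝ) * x ≤ m * (y + (n : ℝ)⁻¹) := by
    rw [mul_add, ← div_eq_mul_inv]; exact e7
  exact le_of_mul_le_mul_left e8 hmR

end HaltingBlocks

/-- There is a decidable class of finitely supported hypotheses which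
is properly CPAC learnable but not properly SCPAC learnable. -/
theorem exists_properCPAC_not_properSCPAC :
    ∃ H : Set Hyp, DecidableClass H ∧ (∀ h ∈ H, FinitelySupported h) ∧
      ProperlyCPACLearnable H ∧ ¬ ProperlySCPACLearnable H := by
  exact ⟨HaltingBlocks.blockClass, HaltingBlocks.decidableClass_blockClass,
    by rintro _ ⟨c, rfl⟩; exact HaltingBlocks.hypSupport_finite c,
    ⟨HaltingBlocks.learner, HaltingBlocks.computable_learner, fun _ => ⟨_, rfl⟩,
      HaltingBlocks.pacLearns⟩, HaltingBlocks.not_properlySCPAC⟩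
end

section
/- There exists a decidable hypothesis class 𝓗 ⊆ {0,1}^ℕ consisting only of finitely supported functions with Littlestone dimension Ldim(𝓗) = 1 which is not CPAC learnable (even improperly). -/
/-!
The class is obtained by diagonalizing against all partial recursive functions `ℕ → ℕ`. The domain
`ℕ` is cut into blocks by the first coordinate of the pairing function, and block `b` is devoted to
the program `c` with number `b`. If `c` halts on input `b` after exactly `s + 1` steps, with output
the code of a list `l`, then the class contains one hypothesis supported in block `b`: its support
consists of the points `pair b (2 i + 1)`, `i ∈ l`, and of the marker `pair b (2 s)`. The marker
makes the class decidable, since it bounds the simulation needed to verify a given support. A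
program halts at a unique time, so distinct members of the class have disjoint supports
(`diagClass_eq_of_common`); hence after a right turn at the root of a tree only one hypothesis is
left, and no tree of depth two is shattered.

Suppose a computable `A` learns the class to accuracy and confidence `1/9` from `m` examples. Let
`N = 2 m + 1`. A no-free-lunch count (`exists_hard_labeling`) gives, in each block `b`, a labeling
of the `N` points `pair b (2 i + 1)`, `i < N`, on which the average error of `A` over samples of
size `m` is at least `1/4`. Such a labeling is determined by the finite table of the values of `A`
on samples and test points from the block; `m` being fixed, the size of the table does not depend
on `b`, so the table is computable in `b`, and so is every function of it, since it ranges over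
a finite type. Thus `b ↦ (code of a hard labeling of block b)` is computed by some program `c`, and
the hypothesis attached to the block numbered by `c` itself realizes the hard labeling there. On
the uniform distribution over this labeled block, the class has error `0`, while the learning
guarantee would bound the average error of `A` by `1/9 + 1/9 < 1/4` (`not_PACCondition`).
-/

open Filter
open scoped ENNReal

/-! ### The no-free-lunch count -/

/-- A prediction at `i` that does not depend on the label of `i` is wrong for exactly half of all
labelings. -/
theorem two_mul_card_ne {N : ℕ} (i : Fin N) (F : (Fin N → Bool) → Bool)
    (hF : ∀ g, F (Function.update g i (!g i)) = F g) :
    2 * (Finset.univ.filter fun g : Fin N → Bool => F g ≠ g i).card = 2 ^ N := by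
  have hflip : (Finset.univ.filter fun g : Fin N → Bool => F g ≠ g i).card
      = (Finset.univ.filter fun g : Fin N → Bool => ¬ F g ≠ g i).card := by
    refine Finset.card_nbij' (fun g => Function.update g i (!g i))
      (fun g => Function.update g i (!g i)) ?_ ?_ ?_ ?_
    · intro g hg
      simp only [Finset.coe_filter, Finset.mem_univ, true_and, Set.mem_ofPred_eq] at hg ⊢
      rw [hF, Function.update_self]
      revert hg
      cases F g <;> cases g i <;> simp
    · intro g hg
      simp only [Finset.coe_filter, Finset.mem_univ, true_and, Set.mem_ofPred_eq] at hg ⊢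
      rw [hF, Function.update_self]
      revert hg
      cases F g <;> cases g i <;> simp
    · intro g _
      simp
    · intro g _
      simp
  have hsplit := Finset.card_filter_add_card_filter_not (s := Finset.univ)
    (fun g : Fin N → Bool => F g ≠ g i)
  have hcard : (Finset.univ : Finset (Fin N → Bool)).card = 2 ^ N := by simp
  omega

/-- No free lunch. Here `σ` is the tuple of sampled points, `g` the labeling, and `T σ g` the
predictor obtained from the sample `σ` labeled by `g`, so it depends on `g` only through `g ∘ σ`.
Some labeling makes the average over `σ` of the error of `T σ g` at least `1/4`, because at least
half of the points are unseen and the average over `g` of the error at an unseen point is `1/2`. -/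
theorem exists_hard_labeling {m N : ℕ} (hN : 2 * m ≤ N)
    (T : (Fin m → Fin N) → (Fin N → Bool) → Fin N → Bool)
    (hT : ∀ σ g g', (∀ j, g (σ j) = g' (σ j)) → T σ g = T σ g') :
    ∃ g : Fin N → Bool,
      N ^ m * N ≤ 4 * ∑ σ : Fin m → Fin N, (Finset.univ.filter fun i => T σ g i ≠ g i).card := by
  have hσ : ∀ σ : Fin m → Fin N, N * 2 ^ N ≤
      4 * ∑ g : Fin N → Bool, (Finset.univ.filter fun i => T σ g i ≠ g i).card := by
    intro σ
    have hswap : ∑ g : Fin N → Bool, (Finset.univ.filter fun i => T σ g i ≠ g i).card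
        = ∑ i : Fin N, (Finset.univ.filter fun g : Fin N → Bool => T σ g i ≠ g i).card := by
      simp only [Finset.card_filter]
      exact Finset.sum_comm
    have hunseen : ∀ i ∈ (Finset.univ.image σ)ᶜ,
        2 ^ N = 2 * (Finset.univ.filter fun g : Fin N → Bool => T σ g i ≠ g i).card := by
      intro i hi
      refine (two_mul_card_ne i (fun g => T σ g i) fun g => ?_).symm
      refine congrFun (hT σ _ _ fun j => ?_) i
      refine Function.update_of_ne ?_ _ _
      rintro rfl
      simp at hi
    have hcard : N - m ≤ ((Finset.univ.image σ)ᶜ).card := by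
      rw [Finset.card_compl, Fintype.card_fin]
      have : (Finset.univ.image σ).card ≤ m := by
        simpa using Finset.card_image_le (s := Finset.univ) (f := σ)
      omega
    have hsub : ∑ i ∈ (Finset.univ.image σ)ᶜ,
        (Finset.univ.filter fun g : Fin N → Bool => T σ g i ≠ g i).card
        ≤ ∑ i : Fin N, (Finset.univ.filter fun g : Fin N → Bool => T σ g i ≠ g i).card :=
      Finset.sum_le_sum_of_subset (Finset.subset_univ _)
    have hconst : ((Finset.univ.image σ)ᶜ).card * 2 ^ N = 2 * ∑ i ∈ (Finset.univ.image σ)ᶜ,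
        (Finset.univ.filter fun g : Fin N → Bool => T σ g i ≠ g i).card := by
      rw [Finset.mul_sum, ← Finset.sum_congr rfl hunseen, Finset.sum_const, smul_eq_mul]
    rw [hswap]
    have h1 : (N - m) * 2 ^ N ≤ ((Finset.univ.image σ)ᶜ).card * 2 ^ N :=
      Nat.mul_le_mul_right _ hcard
    have h2 : N * 2 ^ N ≤ 2 * ((N - m) * 2 ^ N) := by
      rw [← mul_assoc]
      exact Nat.mul_le_mul_right _ (by omega)
    omega
  by_contra! hcon
  have hlt : ∑ g : Fin N → Bool, 4 * ∑ σ : Fin m → Fin N,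
      (Finset.univ.filter fun i => T σ g i ≠ g i).card < ∑ _g : Fin N → Bool, N ^ m * N :=
    Finset.sum_lt_sum_of_nonempty Finset.univ_nonempty fun g _ => hcon g
  have hge : ∑ _σ : Fin m → Fin N, N * 2 ^ N ≤ ∑ σ : Fin m → Fin N,
      4 * ∑ g : Fin N → Bool, (Finset.univ.filter fun i => T σ g i ≠ g i).card :=
    Finset.sum_le_sum fun σ _ => hσ σ
  rw [← Finset.mul_sum, Finset.sum_comm, Finset.mul_sum] at hlt
  have := hge.trans_lt hlt
  simp only [Finset.sum_const, Finset.card_univ, Fintype.card_fun, Fintype.card_fin,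
    Fintype.card_bool, smul_eq_mul] at this
  exact absurd this (by rw [← mul_assoc, mul_comm]; exact lt_irrefl _)

/-! ### Samples from a uniform distribution -/

theorem uniformOfFintype_fin_succ (m N : ℕ) [NeZero N] :
    PMF.uniformOfFintype (Fin (m + 1) → Fin N)
      = (PMF.uniformOfFintype (Fin N)).bind fun i =>
          (PMF.uniformOfFintype (Fin m → Fin N)).map (Fin.cons i) := by
  classical
  ext σ
  rw [PMF.bind_apply, tsum_eq_single (σ 0), PMF.map_apply, tsum_eq_single (Fin.tail σ)]
  · simp only [PMF.uniformOfFintype_apply, Fin.cons_self_tail, if_true, Fintype.card_fun,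
      Fintype.card_fin, Nat.cast_pow]
    rw [pow_succ', ENNReal.mul_inv (Or.inr (by simp)) (Or.inl (by simp))]
  · intro τ hτ
    refine if_neg fun h => hτ ?_
    rw [h, Fin.tail_cons]
  · intro i hi
    rw [PMF.map_apply, ENNReal.tsum_eq_zero.2, mul_zero]
    intro τ
    refine if_neg fun h => hi ?_
    rw [h, Fin.cons_zero]

/-- Independent draws from the image of a uniform distribution are the image of a uniformly chosen
index tuple. -/
theorem iidPMF_map_uniform {N : ℕ} [NeZero N] (f : Fin N → ℕ × Bool) (m : ℕ) :
    iidPMF ((PMF.uniformOfFintype (Fin N)).map f) m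
      = (PMF.uniformOfFintype (Fin m → Fin N)).map fun σ => List.ofFn fun j => f (σ j) := by
  induction m with
  | zero =>
    simp only [iidPMF, List.ofFn_zero]
    exact (PMF.map_const _ _).symm
  | succ m ih =>
    rw [iidPMF, ih, uniformOfFintype_fin_succ, PMF.bind_map, PMF.map_bind]
    refine congrArg _ (funext fun i => ?_)
    simp only [Function.comp_apply, PMF.map_comp]
    refine congrArg (fun F => PMF.map F _) (funext fun τ => ?_)
    simp [List.ofFn_succ]

theorem uniform_toOuterMeasure {α : Type*} [Fintype α] [Nonempty α] (p : α → Prop)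
    [DecidablePred p] :
    (PMF.uniformOfFintype α).toOuterMeasure {a | p a}
      = ((Finset.univ.filter p).card : ℝ≥0∞) / (Fintype.card α : ℝ≥0∞) := by
  rw [PMF.toOuterMeasure_uniformOfFintype_apply]
  simp [Fintype.card_subtype]

theorem natCast_div_le_inv {a b c : ℕ} (hb : b ≠ 0) (hc : c ≠ 0)
    (h : (a : ℝ≥0∞) / b ≤ (c : ℝ≥0∞)⁻¹) : c * a ≤ b := by
  rw [ENNReal.div_le_iff (by simpa) (by simp), ← ENNReal.div_eq_inv_mul,
    ENNReal.le_div_iff_mul_le (Or.inl (by simpa)) (Or.inl (by simp))] at h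
  rw [mul_comm]
  exact_mod_cast h

/-- If some `h ∈ H` realizes the labeling `g` of the points `p`, and the average error of `A` on it
is at least `1/4`, then `A` violates the PAC inequality for `n = 9`, which would give an average
error of at most `1/9 + 1/9`. -/
theorem not_PACCondition {m N : ℕ} [NeZero N] {A : Learner} {H : Set Hyp} {h : Hyp} (hH : h ∈ H)
    {p : Fin N → ℕ} {g : Fin N → Bool} (hg : ∀ i, h (p i) = g i)
    (hA : N ^ m * N ≤ 4 * ∑ σ : Fin m → Fin N,
      (Finset.univ.filter fun i =>
        A (List.ofFn fun j => (p (σ j), g (σ j))) (p i) ≠ g i).card) :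
    ¬ PACCondition A H 9 m := by
  classical
  intro hPAC
  have hN : N ≠ 0 := NeZero.ne N
  have hgen : ∀ k : Hyp, genError ((PMF.uniformOfFintype (Fin N)).map fun i => (p i, g i)) k
      = ((Finset.univ.filter fun i => k (p i) ≠ g i).card : ℝ≥0∞) / (N : ℝ≥0∞) := by
    intro k
    rw [genError, PMF.toOuterMeasure_map_apply]
    simpa using uniform_toOuterMeasure fun i : Fin N => k (p i) ≠ g i
  have hinf : (⨅ k ∈ H, genError ((PMF.uniformOfFintype (Fin N)).map fun i => (p i, g i)) k)
      = 0 := by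
    refine le_antisymm ((iInf₂_le h hH).trans ?_) bot_le
    rw [hgen]
    simp [hg]
  set err : (Fin m → Fin N) → ℕ := fun σ =>
    (Finset.univ.filter fun i =>
        A (List.ofFn fun j => (p (σ j), g (σ j))) (p i) ≠ g i).card with herr
  have hD := hPAC ((PMF.uniformOfFintype (Fin N)).map fun i => (p i, g i))
  rw [hinf, zero_add, samplePr, iidPMF_map_uniform, PMF.toOuterMeasure_map_apply] at hD
  simp only [Set.preimage_ofPred_eq, hgen] at hD
  rw [uniform_toOuterMeasure] at hD
  set good : Finset (Fin m → Fin N) := Finset.univ.filter fun σ =>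
    ((err σ : ℕ) : ℝ≥0∞) / (N : ℝ≥0∞) ≤ ((9 : ℕ) : ℝ≥0∞)⁻¹ with hgood
  have hbadcard : 9 * goodᶜ.card ≤ N ^ m := by
    refine natCast_div_le_inv (pow_ne_zero m hN) (by norm_num) ?_
    have hsum : good.card + goodᶜ.card = N ^ m := by
      rw [Finset.card_add_card_compl]
      simp
    rw [tsub_le_iff_right, Fintype.card_fun, Fintype.card_fin, Fintype.card_fin] at hD
    have h1 : (1 : ℝ≥0∞) = (good.card : ℝ≥0∞) / ((N ^ m : ℕ) : ℝ≥0∞)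
        + (goodᶜ.card : ℝ≥0∞) / ((N ^ m : ℕ) : ℝ≥0∞) := by
      rw [← ENNReal.add_div, ← Nat.cast_add, hsum, ENNReal.div_self]
      · exact_mod_cast pow_ne_zero m hN
      · exact ENNReal.natCast_ne_top _
    rw [h1] at hD
    refine (ENNReal.add_le_add_iff_left ?_).1 hD
    exact ENNReal.div_ne_top (ENNReal.natCast_ne_top _) (by exact_mod_cast pow_ne_zero m hN)
  have hgooderr : ∀ σ ∈ good, 9 * err σ ≤ N := fun σ hσ =>
    natCast_div_le_inv hN (by norm_num) (Finset.mem_filter.1 hσ).2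
  have herrN : ∀ σ, err σ ≤ N := fun σ => by
    simpa using Finset.card_le_univ (Finset.univ.filter fun i =>
        A (List.ofFn fun j => (p (σ j), g (σ j))) (p i) ≠ g i)
  have h1 : 9 * ∑ σ ∈ good, err σ ≤ N ^ m * N := by
    rw [Finset.mul_sum]
    refine (Finset.sum_le_card_nsmul _ _ _ hgooderr).trans ?_
    rw [smul_eq_mul]
    refine Nat.mul_le_mul_right _ ?_
    simpa using Finset.card_le_univ good
  have h2 : 9 * ∑ σ ∈ goodᶜ, err σ ≤ N ^ m * N := by
    have := Finset.sum_le_card_nsmul goodᶜ _ _ fun σ _ => herrN σ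
    rw [smul_eq_mul] at this
    calc 9 * ∑ σ ∈ goodᶜ, err σ ≤ 9 * (goodᶜ.card * N) := Nat.mul_le_mul_left _ this
      _ = (9 * goodᶜ.card) * N := (mul_assoc _ _ _).symm
      _ ≤ N ^ m * N := Nat.mul_le_mul_right _ hbadcard
  have h3 : ∑ σ ∈ good, err σ + ∑ σ ∈ goodᶜ, err σ = ∑ σ, err σ := Finset.sum_add_sum_compl _ _
  have h4 : 0 < N ^ m * N := Nat.mul_pos (Nat.pow_pos (Nat.pos_of_ne_zero hN))
    (Nat.pos_of_ne_zero hN)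
  change N ^ m * N ≤ 4 * ∑ σ, err σ at hA
  omega

/-! ### The diagonal class -/

section Diagonal

open Nat.Partrec (Code)

/-- The program with number `b`, run on its own number, halts at time exactly `s + 1`, in the sense
that `s + 1` is the least fuel for which `evaln` returns a value. Halting times are never `0`, as
`evaln 0` returns nothing. -/
def HaltsAt (b s : ℕ) : Prop :=
  (Code.evaln s (Denumerable.ofNat Code b) b).isSome = false ∧
    (Code.evaln (s + 1) (Denumerable.ofNat Code b) b).isSome = true

/-- The output at time `s + 1` of the program with number `b` on input `b`, decoded as a list.
It is meaningful only under `HaltsAt b s`: `0` is decoded if there is no output. -/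
def outList (b s : ℕ) : List ℕ :=
  Denumerable.ofNat (List ℕ) ((Code.evaln (s + 1) (Denumerable.ofNat Code b) b).getD 0)

/-- The support attached to block `b` and halting time `s`: the even second coordinate `2 * s` is
the marker, and `i` in the output list contributes the odd second coordinate `2 * i + 1`. -/
def diagSupp (b s : ℕ) : List ℕ :=
  Nat.pair b (2 * s) :: (outList b s).map fun i => Nat.pair b (2 * i + 1)

/-- The diagonal class: one hypothesis for each program that halts on its own number. -/
def diagClass : Set Hyp := {h | ∃ b s, HaltsAt b s ∧ h = listIndicator (diagSupp b s)}

theorem HaltsAt.unique {b s t : ℕ} (hs : HaltsAt b s) (ht : HaltsAt b t) : s = t := by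
  have key : ∀ {s t}, HaltsAt b s → HaltsAt b t → ¬ s < t := by
    intro s t hs ht hlt
    obtain ⟨v, hv⟩ := Option.isSome_iff_exists.1 hs.2
    have := Code.evaln_mono (show s + 1 ≤ t by omega) hv
    have ht1 := ht.1
    rw [Option.mem_def] at this
    rw [this] at ht1
    simp at ht1
  have h1 := key hs ht
  have h2 := key ht hs
  omega

theorem unpair_fst_of_mem_diagSupp {b s x : ℕ} (h : x ∈ diagSupp b s) : x.unpair.1 = b := by
  simp only [diagSupp, List.mem_cons, List.mem_map] at h
  rcases h with rfl | ⟨i, -, rfl⟩ <;> simp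

/-- Distinct members of the diagonal class have disjoint supports. -/
theorem diagClass_eq_of_common {h h' : Hyp} (hh : h ∈ diagClass) (hh' : h' ∈ diagClass) {x : ℕ}
    (hx : h x = true) (hx' : h' x = true) : h = h' := by
  obtain ⟨b, s, hs, rfl⟩ := hh
  obtain ⟨c, t, ht, rfl⟩ := hh'
  simp only [listIndicator, decide_eq_true_eq] at hx hx'
  obtain rfl : b = c := by
    rw [← unpair_fst_of_mem_diagSupp hx, ← unpair_fst_of_mem_diagSupp hx']
  rw [hs.unique ht]

/-- A program `c` computing a total function `G` contributes a hypothesis whose trace on the block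
of `c` is the list coded by `G` at the number of `c`. -/
theorem exists_mem_diagClass {G : ℕ → ℕ} {c : Code} (hc : ∀ n, c.eval n = Part.some (G n)) :
    ∃ s, listIndicator (diagSupp (Encodable.encode c) s) ∈ diagClass ∧
      outList (Encodable.encode c) s = Denumerable.ofNat (List ℕ) (G (Encodable.encode c)) := by
  classical
  set b := Encodable.encode c with hb
  have hmem : G b ∈ c.eval b := by simp [hc]
  have hex : ∃ k, (Code.evaln k c b).isSome = true := by
    obtain ⟨k, hk⟩ := Code.evaln_complete.1 hmem
    exact ⟨k, Option.isSome_iff_exists.2 ⟨_, hk⟩⟩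
  have hpos : Nat.find hex ≠ 0 := by
    intro h0
    have := Nat.find_spec hex
    rw [h0] at this
    simp [Code.evaln] at this
  obtain ⟨s, hs⟩ := Nat.exists_eq_succ_of_ne_zero hpos
  have hsome : (Code.evaln (s + 1) c b).isSome = true := by
    have := Nat.find_spec hex
    rwa [hs] at this
  have hnone : (Code.evaln s c b).isSome = false := by
    have := Nat.find_min hex (m := s) (by omega)
    simpa using this
  have hof : Denumerable.ofNat Code b = c := Denumerable.ofNat_encode c
  refine ⟨s, ⟨b, s, ⟨?_, ?_⟩, rfl⟩, ?_⟩
  · rwa [hof]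
  · rwa [hof]
  · obtain ⟨v, hv⟩ := Option.isSome_iff_exists.1 hsome
    have hvG : v = G b := Part.mem_unique (Code.evaln_sound hv) hmem
    rw [outList, hof, hv, hvG, Option.getD_some]

/-- A list is the support of a member iff one of its elements `x` is a marker: the block number
`b` and the time `s` are read off from `x`, and it remains to run program `b` for `s + 1` steps. -/
theorem decidableClass_diagClass : DecidableClass diagClass := by
  have hb : Primrec fun x : ℕ => x.unpair.1 := Primrec.fst.comp Primrec.unpair
  have hs : Primrec fun x : ℕ => x.unpair.2 / 2 :=
    Primrec.nat_div.comp (Primrec.snd.comp Primrec.unpair) (Primrec.const 2)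
  have hcode : Primrec fun x : ℕ => Denumerable.ofNat Code x.unpair.1 :=
    (Primrec.ofNat Code).comp hb
  have hev0 : Primrec fun x : ℕ =>
      Code.evaln (x.unpair.2 / 2) (Denumerable.ofNat Code x.unpair.1) x.unpair.1 :=
    Code.primrec_evaln.comp ((hs.pair hcode).pair hb)
  have hev1 : Primrec fun x : ℕ =>
      Code.evaln (x.unpair.2 / 2 + 1) (Denumerable.ofNat Code x.unpair.1) x.unpair.1 :=
    Code.primrec_evaln.comp (((Primrec.succ.comp hs).pair hcode).pair hb)
  have hhalt : PrimrecPred fun x : ℕ => HaltsAt x.unpair.1 (x.unpair.2 / 2) :=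
    PrimrecPred.and
      (Primrec.eq.comp (Primrec.option_isSome.comp hev0) (Primrec.const false))
      (Primrec.eq.comp (Primrec.option_isSome.comp hev1) (Primrec.const true))
  have hout : Primrec fun x : ℕ => outList x.unpair.1 (x.unpair.2 / 2) :=
    (Primrec.ofNat (List ℕ)).comp (Primrec.option_getD.comp hev1 (Primrec.const 0))
  have hsupp : Primrec fun x : ℕ => diagSupp x.unpair.1 (x.unpair.2 / 2) := by
    refine Primrec.list_cons.comp (Primrec₂.natPair.comp hb
      (Primrec.nat_mul.comp (Primrec.const 2) hs)) (Primrec.list_map hout ?_)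
    exact Primrec₂.natPair.comp (hb.comp Primrec.fst)
      (Primrec.succ.comp (Primrec.nat_mul.comp (Primrec.const 2) Primrec.snd))
  have hmem : PrimrecRel fun (x : ℕ) (l : List ℕ) => x ∈ l := by
    have : PrimrecRel fun (l : List ℕ) (x : ℕ) => ∃ a ∈ l, a = x :=
      PrimrecRel.exists_mem_list Primrec.eq
    refine PrimrecPred.of_eq (this.comp Primrec.snd Primrec.fst) fun p => ?_
    simp
  have hsub : PrimrecRel fun (k l : List ℕ) => ∀ x ∈ k, x ∈ l :=
    PrimrecRel.forall_mem_list hmem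
  have hrel : PrimrecRel fun (x : ℕ) (l : List ℕ) =>
      HaltsAt x.unpair.1 (x.unpair.2 / 2) ∧
        ((∀ y ∈ diagSupp x.unpair.1 (x.unpair.2 / 2), y ∈ l) ∧
          ∀ y ∈ l, y ∈ diagSupp x.unpair.1 (x.unpair.2 / 2)) :=
    PrimrecPred.and (hhalt.comp Primrec.fst)
      (PrimrecPred.and (hsub.comp (hsupp.comp Primrec.fst) Primrec.snd)
        (hsub.comp Primrec.snd (hsupp.comp Primrec.fst)))
  have hdec : PrimrecPred fun l : List ℕ => ∃ x ∈ l,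
      HaltsAt x.unpair.1 (x.unpair.2 / 2) ∧
        ((∀ y ∈ diagSupp x.unpair.1 (x.unpair.2 / 2), y ∈ l) ∧
          ∀ y ∈ l, y ∈ diagSupp x.unpair.1 (x.unpair.2 / 2)) :=
    (PrimrecRel.exists_mem_list hrel).comp Primrec.id Primrec.id
  -- The test may succeed at a non-marker element `x` whose halved second coordinate is a halting
  -- time; this is harmless, since the list is then compared with the whole of `diagSupp`.
  obtain ⟨hd, hp⟩ := hdec
  refine ⟨_, hp.to_comp, fun l => ?_⟩
  rw [decide_eq_true_eq]
  constructor
  · rintro ⟨x, -, hx, h1, h2⟩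
    refine ⟨_, _, hx, funext fun y => ?_⟩
    simp only [listIndicator]
    exact decide_eq_decide.2 ⟨h2 y, h1 y⟩
  · rintro ⟨b, s, hx, heq⟩
    have hiff : ∀ y, y ∈ l ↔ y ∈ diagSupp b s := fun y => by
      simpa [listIndicator] using congrFun heq y
    have hs2 : 2 * s / 2 = s := by omega
    refine ⟨Nat.pair b (2 * s), (hiff _).2 (by simp [diagSupp]), ?_⟩
    simp only [Nat.unpair_pair, hs2]
    exact ⟨hx, fun y => (hiff y).2, fun y => (hiff y).1⟩

/-! ### The diagonal class is not learnable by a computable learner -/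

theorem not_CPACLearnable_diagClass : ¬ CPACLearnable diagClass := by
  rintro ⟨A, hA, hPAC⟩
  obtain ⟨m, hm⟩ := hPAC 9
  replace hm := hm m le_rfl
  let N := 2 * m + 1
  -- `pt b i` is the `i`-th data point of block `b`.
  let pt : ℕ → Fin N → ℕ := fun b i => Nat.pair b (2 * (i : ℕ) + 1)
  let K := (Fin m → Fin N) × (Fin N → Bool) × Fin N
  -- `T b (σ, g, i)` is the prediction at point `i` of block `b` after seeing the points `σ`
  -- labeled by `g`.
  let T : ℕ → K → Bool := fun b k =>
    A (List.ofFn fun j => (pt b (k.1 j), k.2.1 (k.1 j))) (pt b k.2.2)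
  have hT : ∀ k, Computable fun b => T b k := by
    intro k
    have hpt : ∀ i : Fin N, Primrec fun b => pt b i := fun i =>
      Primrec₂.natPair.comp Primrec.id (Primrec.const _)
    exact hA.comp (Primrec.list_ofFn fun j =>
      Primrec.pair (hpt (k.1 j)) (Primrec.const _)).to_comp (hpt _).to_comp
  let e : K ≃ Fin (Fintype.card K) := Fintype.equivFin K
  let V : ℕ → List.Vector Bool (Fintype.card K) := fun b =>
    List.Vector.ofFn fun r => T b (e.symm r)
  have hV : Computable V := Computable.vector_ofFn fun r => hT (e.symm r)
  have hVT : ∀ b k, (V b).get (e k) = T b k := fun b k => by simp [V]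
  -- A hard labeling is chosen for each table `v` rather than for each `b`, so that the choice is
  -- a function on a finite type.
  have hex : ∀ v : List.Vector Bool (Fintype.card K), ∃ g : Fin N → Bool,
      (∃ b, V b = v) → N ^ m * N ≤ 4 * ∑ σ : Fin m → Fin N,
        (Finset.univ.filter fun i => v.get (e (σ, g, i)) ≠ g i).card := by
    intro v
    by_cases hv : ∃ b, V b = v
    · obtain ⟨b, rfl⟩ := hv
      obtain ⟨g, hg⟩ := exists_hard_labeling (m := m) (N := N) (by omega)
        (fun σ g i => T b (σ, g, i)) (fun σ g g' h => by simp only [T, h])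
      exact ⟨g, fun _ => by simpa only [hVT] using hg⟩
    · exact ⟨fun _ => false, fun h => absurd h hv⟩
  choose lab hlab using hex
  let ones : List.Vector Bool (Fintype.card K) → List ℕ := fun v =>
    ((List.finRange N).filter (lab v)).map Fin.val
  have hG : Computable fun b => Encodable.encode (ones (V b)) :=
    (Primrec.dom_finite fun v => Encodable.encode (ones v)).to_comp.comp hV
  obtain ⟨c, hc⟩ := Code.exists_code.1 (Partrec.nat_iff.1 hG)
  obtain ⟨s, hmem, hout⟩ := exists_mem_diagClass
    (G := fun b => Encodable.encode (ones (V b))) (c := c) (fun n => by rw [hc]; rfl)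
  rw [Denumerable.ofNat_encode] at hout
  have hN : NeZero N := ⟨by omega⟩
  set b := Encodable.encode c
  refine not_PACCondition hmem (p := pt b) (g := lab (V b)) (fun i => ?_) ?_ hm
  · rw [listIndicator, Bool.eq_iff_iff, decide_eq_true_eq, diagSupp, hout]
    simp only [pt, ones, List.mem_cons, List.mem_map, Nat.pair_eq_pair, true_and]
    constructor
    · rintro (h | ⟨x, ⟨j, hj, rfl⟩, hji⟩)
      · omega
      · obtain rfl : j = i := Fin.ext (by omega)
        simpa using hj
    · intro h
      exact Or.inr ⟨i, ⟨i, by simpa using h, rfl⟩, rfl⟩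
  · simpa only [hVT] using hlab (V b) ⟨b, rfl⟩

end Diagonal

/-- There is a decidable class of finitely supported hypotheses with
Littlestone dimension exactly 1 (it shatters some tree of depth 1 but no tree of depth
`d ≥ 2`) which is not (even improperly) CPAC learnable. -/
theorem exists_Ldim_one_not_CPAC :
    ∃ H : Set Hyp, DecidableClass H ∧ (∀ h ∈ H, FinitelySupported h) ∧
      (∃ t : List Bool → ℕ, ShattersTree H 1 t) ∧
      (∀ d : ℕ, 2 ≤ d → ∀ t : List Bool → ℕ, ¬ ShattersTree H d t) ∧
      ¬ CPACLearnable H := by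
  have hmarker : ∀ b s, listIndicator (diagSupp b s) (Nat.pair b (2 * s)) = true := fun b s => by
    simp [listIndicator, diagSupp]
  refine ⟨diagClass, decidableClass_diagClass, ?_, ?_, ?_, not_CPACLearnable_diagClass⟩
  · rintro _ ⟨b, s, -, rfl⟩
    refine (diagSupp b s).finite_toSet.subset fun x hx => ?_
    simpa [hypSupport, listIndicator] using hx
  · obtain ⟨s, hs, -⟩ := exists_mem_diagClass (G := fun _ => 0) (c := Nat.Partrec.Code.zero)
      (fun n => rfl)
    obtain ⟨t, ht, -⟩ := exists_mem_diagClass (G := Nat.succ) (c := Nat.Partrec.Code.succ)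
      (fun n => rfl)
    refine ⟨fun _ => Nat.pair (Encodable.encode Nat.Partrec.Code.zero) (2 * s), fun l hl => ?_⟩
    obtain ⟨v, rfl⟩ := List.length_eq_one_iff.1 hl
    cases v with
    | true =>
      refine ⟨_, hs, fun i hi => ?_⟩
      obtain rfl : i = 0 := by simpa using hi
      exact (hmarker _ _).symm
    | false =>
      refine ⟨_, ht, fun i hi => ?_⟩
      obtain rfl : i = 0 := by simpa using hi
      refine (decide_eq_false fun hx => ?_).symm
      have := unpair_fst_of_mem_diagSupp hx
      rw [Nat.unpair_pair] at this
      exact absurd (Encodable.encode_injective this) (by simp)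
  · intro d hd t ht
    -- Two leaves below the right child of the root that differ at the second step.
    obtain ⟨h, hh, h1⟩ := ht (true :: true :: List.replicate (d - 2) false) (by simp; omega)
    obtain ⟨h', hh', h1'⟩ := ht (true :: false :: List.replicate (d - 2) false) (by simp; omega)
    have a0 := h1 0 (by simp)
    have a1 := h1 1 (by simp)
    have b0 := h1' 0 (by simp)
    have b1 := h1' 1 (by simp)
    simp only [List.getElem_cons_zero, List.getElem_cons_succ, List.take_zero,
      List.take_succ_cons] at a0 a1 b0 b1
    rw [diagClass_eq_of_common hh hh' a0.symm b0.symm, ← b1] at a1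
    exact absurd a1 (by simp)
end

section
/- A hypothesis class 𝓗 ⊆ {0,1}^ℕ is properly SCPAC learnable if and only if it has a computable ERM and its VC dimension is finite. -/
/-!
Throughout, `pmfExp P f` is the expectation of a nonnegative function under a discrete distribution.

From learning to an ERM and finite VC dimension. Apply the PAC inequality to the uniform distribution
on the entries of a nonempty sample `S`, whose generalization error is the empirical error on `S`.
The success probability is positive, so some training sample of size `m` with entries from `S` makes
the learner `1/n`-optimal on `S` (`exists_good_resample`).

* With `n = |S| + 2`, being `1/n`-optimal on `S` means being optimal. The number of training samples
  of size `g n` with entries from `S` is finite, and `g` is computable, so an exhaustive search for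
  the output with fewest errors on `S` is a computable ERM; it is proper because its outputs are
  outputs of the given learner (`exists_computable_ERM`).
* With `n = 8` and `S` a labelling of a shattered set of size `8K`, some output is within Hamming
  distance `K` of the labelling. There are at most `(16K)^m` outputs, independently of the labelling,
  and for large `K` the balls of radius `K` around them are too few to cover all `2^(8K)` labellings
  (`shattered_card_bound`). Only the bound for a single accuracy is needed here.

From a computable ERM and finite VC dimension to learning. The ERM is proper, so only a computable
sample size is needed, through uniform convergence. By Jensen's inequality, the exponential moment of
the deviation between true and empirical error, maximized over `H`, is bounded by that of the
difference of the error counts on two independent samples (`exp_sub_errCount_le`). This is invariant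
under averaging over random swaps between the two samples (`doubleExp_swapAvg`). For a fixed pair of
samples, the Sauer–Shelah lemma leaves at most `(d + 1) (2m + 1)^d` hypotheses to consider
(`exists_representatives`), each contributing at most `exp (m t² / 2)` since `cosh x ≤ exp (x² / 2)`.
Markov's inequality with `t = ± 1/(2n)` bounds the probability of a deviation above `1/(2n)` on either
side (`deviationEvent_le`), and the sum is below `1/n` once `m` exceeds an explicit polynomial in `n`
(`sampleBound_spec`).
-/

open Filter
open scoped ENNReal

/-! ### Expectations and resampling -/

/-- The expectation `E_{a ∼ P}[f a]` of a nonnegative function under a discrete distribution. -/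
noncomputable def pmfExp {α : Type*} (P : PMF α) (f : α → ℝ≥0∞) : ℝ≥0∞ := ∑' a, P a * f a

section Expectation
variable {α β : Type*}

lemma pmfExp_mono (P : PMF α) {f g : α → ℝ≥0∞} (h : ∀ a, f a ≤ g a) :
    pmfExp P f ≤ pmfExp P g :=
  ENNReal.tsum_le_tsum fun a => mul_le_mul_right (h a) _

lemma pmfExp_add (P : PMF α) (f g : α → ℝ≥0∞) :
    pmfExp P (fun a => f a + g a) = pmfExp P f + pmfExp P g := by
  simp only [pmfExp, mul_add, ENNReal.tsum_add]

lemma pmfExp_const_mul (P : PMF α) (c : ℝ≥0∞) (f : α → ℝ≥0∞) :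
    pmfExp P (fun a => c * f a) = c * pmfExp P f := by
  simp only [pmfExp, ← ENNReal.tsum_mul_left]
  exact tsum_congr fun a => by ring

lemma pmfExp_const (P : PMF α) (c : ℝ≥0∞) : pmfExp P (fun _ => c) = c := by
  simp [pmfExp, ENNReal.tsum_mul_right, P.tsum_coe]

/-- Tonelli's theorem for discrete distributions. -/
lemma pmfExp_comm (P : PMF α) (Q : PMF β) (f : α → β → ℝ≥0∞) :
    pmfExp P (fun a => pmfExp Q fun b => f a b) = pmfExp Q fun b => pmfExp P fun a => f a b := by
  simp only [pmfExp, ← ENNReal.tsum_mul_left]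
  rw [ENNReal.tsum_comm]
  exact tsum_congr fun b => tsum_congr fun a => by ring

lemma pmfExp_pure (a : α) (f : α → ℝ≥0∞) : pmfExp (PMF.pure a) f = f a := by
  rw [pmfExp, tsum_eq_single a (fun b hb => by simp [PMF.pure_apply_of_ne _ _ hb])]
  simp

lemma pmfExp_bind (P : PMF α) (k : α → PMF β) (f : β → ℝ≥0∞) :
    pmfExp (P.bind k) f = pmfExp P fun a => pmfExp (k a) f := by
  simp only [pmfExp, PMF.bind_apply, ← ENNReal.tsum_mul_left, ← ENNReal.tsum_mul_right]
  rw [ENNReal.tsum_comm]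
  exact tsum_congr fun b => tsum_congr fun a => by ring

lemma pmfExp_map (P : PMF α) (g : α → β) (f : β → ℝ≥0∞) :
    pmfExp (P.map g) f = pmfExp P fun a => f (g a) := by
  rw [← PMF.bind_pure_comp, pmfExp_bind]
  simp [pmfExp_pure]

lemma toOuterMeasure_eq_pmfExp (P : PMF α) (E : Set α) :
    P.toOuterMeasure E = pmfExp P (E.indicator fun _ => 1) := by
  rw [PMF.toOuterMeasure_apply, pmfExp]
  refine tsum_congr fun a => ?_
  by_cases h : a ∈ E <;> simp [h]

end Expectation

lemma pmfExp_iid_zero (D : PMF (ℕ × Bool)) (f : Sample → ℝ≥0∞) :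
    pmfExp (iidPMF D 0) f = f [] := pmfExp_pure _ _

lemma pmfExp_iid_succ (D : PMF (ℕ × Bool)) (m : ℕ) (f : Sample → ℝ≥0∞) :
    pmfExp (iidPMF D (m + 1)) f =
      pmfExp D fun p => pmfExp (iidPMF D m) fun S => f (p :: S) := by
  simp only [iidPMF, pmfExp_bind, pmfExp_map]

/-- Samples of positive probability have the prescribed length and consist of points of positive
probability. -/
lemma mem_support_iidPMF (D : PMF (ℕ × Bool)) : ∀ (m : ℕ) (S : Sample),
    S ∈ (iidPMF D m).support → S.length = m ∧ ∀ p ∈ S, p ∈ D.support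
  | 0, S, h => by
    have : S = [] := by simpa [iidPMF] using h
    simp [this]
  | m + 1, S, h => by
    simp only [iidPMF, PMF.mem_support_bind_iff, PMF.mem_support_map_iff] at h
    obtain ⟨p, hp, T, hT, rfl⟩ := h
    obtain ⟨h1, h2⟩ := mem_support_iidPMF D m T hT
    refine ⟨by simp [h1], fun q hq => ?_⟩
    rcases List.mem_cons.1 hq with rfl | hq
    exacts [hp, h2 q hq]

lemma pmfExp_iid_le_of_length (D : PMF (ℕ × Bool)) : ∀ (m : ℕ) {f g : Sample → ℝ≥0∞},
    (∀ S : Sample, S.length = m → f S ≤ g S) → pmfExp (iidPMF D m) f ≤ pmfExp (iidPMF D m) g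
  | 0, f, g, h => by simpa only [pmfExp_iid_zero] using h [] rfl
  | m + 1, f, g, h => by
    simp only [pmfExp_iid_succ]
    exact pmfExp_mono D fun p => pmfExp_iid_le_of_length D m fun S hS => h _ (by simp [hS])

/-- The number of errors of `h` on the sample `S`. -/
def errCount (h : Hyp) (S : Sample) : ℕ := S.countP fun p => h p.1 != p.2

/-- The uniform distribution on the entries of a nonempty sample. -/
noncomputable def uniformOn (S : Sample) (hS : S ≠ []) : PMF (ℕ × Bool) :=
  PMF.ofMultiset (S : Multiset (ℕ × Bool)) (by simpa using hS)

lemma tsum_count {α : Type*} [DecidableEq α] (s : Multiset α) :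
    ∑' a, (s.count a : ℝ≥0∞) = (Multiset.card s : ℝ≥0∞) := by
  rw [tsum_eq_sum (s := s.toFinset) (fun b hb => by
    rw [Multiset.mem_toFinset] at hb
    exact_mod_cast Multiset.count_eq_zero.2 hb), ← Nat.cast_sum, Multiset.toFinset_sum_count_eq]

lemma genError_uniformOn (S : Sample) (hS : S ≠ []) (h : Hyp) :
    genError (uniformOn S hS) h = empError S h := by
  rw [genError, uniformOn, PMF.toOuterMeasure_ofMultiset_apply, empError]
  congr 1
  rw [@tsum_count _ (_)]
  simp only [Multiset.filter_coe, Multiset.coe_card, List.countP_eq_length_filter]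
  congr 2
  refine List.filter_congr fun p _ => ?_
  by_cases hp : h p.1 = p.2 <;> simp [hp]

/-- If the PAC inequality holds with `n ≥ 2`, the success probability is positive, so applied to
the uniform distribution on `S` it yields a training sample drawn from `S` on which the learner is
within `1/n` of optimal for `S`. -/
lemma exists_good_resample {A : Learner} {H : Set Hyp} {n m : ℕ} (hn : 2 ≤ n)
    (hP : PACCondition A H n m) (S : Sample) (hS : S ≠ []) :
    ∃ T : Sample, T.length = m ∧ (∀ p ∈ T, p ∈ S) ∧
      ∀ h ∈ H, empError S (A T) ≤ empError S h + (n : ℝ≥0∞)⁻¹ := by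
  have h1 := hP (uniformOn S hS)
  have hpos : (0 : ℝ≥0∞) < 1 - (n : ℝ≥0∞)⁻¹ := by
    rw [tsub_pos_iff_lt, ENNReal.inv_lt_one]
    exact_mod_cast hn
  have h2 := (hpos.trans_le h1).ne'
  rw [samplePr, Ne, PMF.toOuterMeasure_apply_eq_zero_iff, Set.not_disjoint_iff] at h2
  obtain ⟨T, hT, hE⟩ := h2
  obtain ⟨hl, hm⟩ := mem_support_iidPMF _ _ _ hT
  refine ⟨T, hl, fun p hp => ?_, fun h hh => ?_⟩
  · simpa [uniformOn] using hm p hp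
  · simp only [Set.mem_ofPred_eq, genError_uniformOn] at hE
    exact hE.trans (add_le_add_left (iInf₂_le h hh) _)

/-- `exists_good_resample` with denominators cleared. -/
lemma exists_good_resample_nat {A : Learner} {H : Set Hyp} {n m : ℕ} (hn : 2 ≤ n)
    (hP : PACCondition A H n m) (S : Sample) (hS : S ≠ []) :
    ∃ T : Sample, T.length = m ∧ (∀ p ∈ T, p ∈ S) ∧
      ∀ h ∈ H, n * errCount (A T) S ≤ n * errCount h S + S.length := by
  obtain ⟨T, hl, hm, hT⟩ := exists_good_resample hn hP S hS
  refine ⟨T, hl, hm, fun h hh => ?_⟩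
  have h1 := hT h hh
  have hN : (0 : ℝ) < S.length := by exact_mod_cast List.length_pos_iff.2 hS
  have hN' : (S.length : ℝ≥0∞) ≠ 0 := by exact_mod_cast (List.length_pos_iff.2 hS).ne'
  have hn' : (0 : ℝ) < n := by positivity
  have hn'' : (n : ℝ≥0∞) ≠ 0 := by exact_mod_cast (by omega : n ≠ 0)
  simp only [empError] at h1
  change ((errCount (A T) S : ℕ) : ℝ≥0∞) / _ ≤ ((errCount h S : ℕ) : ℝ≥0∞) / _ + _ at h1
  have hfin : ((errCount h S : ℕ) : ℝ≥0∞) / S.length ≠ ⊤ :=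
    ENNReal.div_ne_top (ENNReal.natCast_ne_top _) hN'
  have hfin' : ((n : ℝ≥0∞))⁻¹ ≠ ⊤ := ENNReal.inv_ne_top.2 hn''
  have h2 := ENNReal.toReal_mono (ENNReal.add_ne_top.2 ⟨hfin, hfin'⟩) h1
  rw [ENNReal.toReal_add hfin hfin'] at h2
  simp only [ENNReal.toReal_div, ENNReal.toReal_inv, ENNReal.toReal_natCast] at h2
  rw [div_le_iff₀ hN, add_mul, div_mul_cancel₀ _ hN.ne'] at h2
  have h3 := mul_le_mul_of_nonneg_left h2 hn'.le
  rw [mul_add, ← mul_assoc (n : ℝ) (n : ℝ)⁻¹, mul_inv_cancel₀ hn'.ne', one_mul] at h3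
  exact_mod_cast h3

/-! ### Finite VC dimension -/

section NoFreeLunch

/-- The sample consisting of the points of `s`, labelled by `g`. -/
noncomputable def labelled (s : Finset ℕ) (g : s → Bool) : Sample :=
  (Finset.univ : Finset s).toList.map fun x => (x.1, g x)

lemma errCount_labelled (s : Finset ℕ) (g : s → Bool) (f : Hyp) :
    errCount f (labelled s g) = (Finset.univ.filter fun x : s => f x ≠ g x).card := by
  rw [errCount, labelled, List.countP_map, List.countP_eq_length_filter, Finset.card_filter,
    ← Finset.sum_map_toList, ← List.countP_eq_length_filter]
  induction (Finset.univ : Finset s).toList with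
  | nil => simp
  | cons a l ih =>
    rw [List.countP_cons, ih, List.map_cons, List.sum_cons, add_comm]
    congr 1
    by_cases h : f a = g a <;> simp [h]

/-- The generating function, at `1/2`, of the Hamming distance to a fixed `f`. It stands in for an
estimate of the size of a Hamming ball. -/
lemma sum_half_pow_dist (s : Finset ℕ) (f : Hyp) :
    ∑ g : s → Bool, (1 / 2 : ℝ) ^ (Finset.univ.filter fun x : s => f x ≠ g x).card
      = (3 / 2 : ℝ) ^ s.card := by
  have h1 : ∀ g : s → Bool, (1 / 2 : ℝ) ^ (Finset.univ.filter fun x : s => f x ≠ g x).card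
      = ∏ x : s, if f x ≠ g x then (1 / 2 : ℝ) else 1 := by
    intro g
    rw [Finset.prod_ite, Finset.prod_const, Finset.prod_const_one, mul_one]
  have h2 : ∀ x : s, ∑ b : Bool, (if f x ≠ b then (1 / 2 : ℝ) else 1) = 3 / 2 := by
    intro x
    cases f x <;> norm_num [Fintype.sum_bool]
  rw [Finset.sum_congr rfl fun g _ => h1 g,
    ← Fintype.prod_sum fun (x : s) (b : Bool) => if f x ≠ b then (1 / 2 : ℝ) else 1,
    Finset.prod_congr rfl fun x _ => h2 x]
  rw [Finset.prod_const, Finset.card_univ, Fintype.card_coe]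

/-- If a learner with sample size `m` achieves accuracy `1/8` and `H` shatters a set of size
`8 * K`, the Hamming balls of radius `K` around the at most `(16 * K) ^ m` possible outputs cover
all labellings of that set. -/
lemma shattered_card_bound {A : Learner} {H : Set Hyp} {m : ℕ} (hP : PACCondition A H 8 m)
    {s : Finset ℕ} {K : ℕ} (hK : 0 < K) (hs : Shatters H s) (hc : s.card = 8 * K) :
    (4 : ℝ) ^ K ≤ (16 * K : ℝ) ^ m := by
  classical
  let out : (Fin m → s × Bool) → Hyp := fun t => A (List.ofFn fun i => ((t i).1.1, (t i).2))
  have hcover : ∀ g : s → Bool, ∃ t : Fin m → s × Bool,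
      (Finset.univ.filter fun x : s => out t x ≠ g x).card ≤ K := by
    intro g
    have hlen : (labelled s g).length = 8 * K := by simp [labelled, hc]
    have hne : labelled s g ≠ [] := by
      intro h0
      rw [h0] at hlen
      simp at hlen
      omega
    obtain ⟨T, hl, hm, hT⟩ := exists_good_resample_nat (by norm_num) hP _ hne
    obtain ⟨h, hh, hg⟩ := hs fun x => if hx : x ∈ s then g ⟨x, hx⟩ else false
    have hz : errCount h (labelled s g) = 0 := by
      rw [errCount_labelled, Finset.card_eq_zero, Finset.filter_eq_empty_iff]
      intro x _
      simp [hg x.1 x.2]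
    have h1 := hT h hh
    rw [hz, hlen] at h1
    have hmem : ∀ p ∈ T, ∃ q : s × Bool, p = (q.1.1, q.2) := by
      intro p hp
      have := hm p hp
      simp only [labelled, List.mem_map] at this
      obtain ⟨x, _, rfl⟩ := this
      exact ⟨(x, g x), rfl⟩
    have : Nonempty s := (Finset.card_pos.1 (by omega)).to_subtype
    choose! q hq using hmem
    subst hl
    refine ⟨fun i => q (T.get i), ?_⟩
    have hTq : (List.ofFn fun i => ((q (T.get i)).1.1, (q (T.get i)).2)) = T := by
      conv_rhs => rw [← List.ofFn_get T]
      congr 1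
      funext i
      exact (hq _ (List.get_mem T i)).symm
    have : out (fun i => q (T.get i)) = A T := by
      simp only [out]
      rw [hTq]
    rw [this, ← errCount_labelled]
    omega
  have hsum : ∑ g : s → Bool, (1 / 2 : ℝ) ^ K ≤ ∑ g : s → Bool, ∑ t : Fin m → s × Bool,
      (1 / 2 : ℝ) ^ (Finset.univ.filter fun x : s => out t x ≠ g x).card := by
    refine Finset.sum_le_sum fun g _ => ?_
    obtain ⟨t, ht⟩ := hcover g
    refine le_trans ?_ (Finset.single_le_sum (f := fun t : Fin m → s × Bool =>
      (1 / 2 : ℝ) ^ (Finset.univ.filter fun x : s => out t x ≠ g x).card)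
      (fun _ _ => by positivity) (Finset.mem_univ t))
    exact pow_le_pow_of_le_one (by norm_num) (by norm_num) ht
  rw [Finset.sum_comm, Finset.sum_congr rfl fun t _ => sum_half_pow_dist s (out t)] at hsum
  simp only [Finset.sum_const, Finset.card_univ, Fintype.card_pi, Fintype.card_bool,
    Fintype.card_prod, Fintype.card_coe, Finset.prod_const, Fintype.card_fin, hc, nsmul_eq_mul]
    at hsum
  push_cast at hsum
  -- `2 ^ 8 / 2 = 4 * 32`, whereas `(3 / 2) ^ 8 < 32`
  have e1 : (2 : ℝ) ^ (8 * K) * (1 / 2) ^ K = 4 ^ K * 32 ^ K := by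
    rw [pow_mul, ← mul_pow, ← mul_pow]
    norm_num
  have e2 : (3 / 2 : ℝ) ^ (8 * K) ≤ 32 ^ K := by
    rw [pow_mul]
    exact pow_le_pow_left₀ (by positivity) (by norm_num) K
  rw [e1, show (8 * K * 2 : ℝ) = 16 * K by ring] at hsum
  have e3 : (0 : ℝ) < 32 ^ K := by positivity
  refine le_of_mul_le_mul_right (hsum.trans ?_) e3
  gcongr

/-- An exponential in `K` outgrows a polynomial in `K`, so `shattered_card_bound` bounds the size of
shattered sets. -/
lemma finiteVCDim_of_PACCondition {A : Learner} {H : Set Hyp} {m : ℕ}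
    (hP : PACCondition A H 8 m) : FiniteVCDim H := by
  by_contra hno
  have key : ∀ K : ℕ, 0 < K → (4 : ℝ) ^ K ≤ (16 * K : ℝ) ^ m := by
    intro K hK
    simp only [FiniteVCDim, VCDimAtMost] at hno
    push Not at hno
    obtain ⟨s, hs, hcard⟩ := hno (8 * K)
    obtain ⟨t, hts, htc⟩ := Finset.exists_subset_card_eq hcard.le
    refine shattered_card_bound hP hK (s := t) (fun g => ?_) htc
    obtain ⟨h, hh, hg⟩ := hs g
    exact ⟨h, hh, fun x hx => hg x (hts hx)⟩
  have hlim := (tendsto_pow_const_div_const_pow_of_one_lt m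
    (by norm_num : (1 : ℝ) < 4)).const_mul ((16 : ℝ) ^ m)
  rw [mul_zero] at hlim
  obtain ⟨K, hK1, hK2⟩ := ((hlim.eventually_lt_const one_pos).and (eventually_gt_atTop 0)).exists
  have h4 : (0 : ℝ) < 4 ^ K := by positivity
  rw [← mul_div_assoc, ← mul_pow, div_lt_one h4] at hK1
  exact absurd (key K hK2) (not_le.2 hK1)

end NoFreeLunch

/-! ### The computable ERM -/

section Computability

/-- A fold over a computable list with a computable step is computable: the fold is a recursion on
the index into the list. -/
lemma computable_list_foldl {α β σ : Type*} [Primcodable α] [Primcodable β] [Primcodable σ]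
    {f : α → List β} {g : α → σ} {h : α → σ × β → σ} (hf : Computable f) (hg : Computable g)
    (hh : Computable₂ h) :
    Computable fun a => (f a).foldl (fun s b => h a (s, b)) (g a) := by
  have key : ∀ (a : α) (l : List β) (s : σ), l.foldl (fun s b => h a (s, b)) s =
      Nat.rec s (fun i acc => Option.casesOn (l[i]?) acc fun b => h a (acc, b)) l.length := by
    intro a l
    induction l using List.reverseRecOn with
    | nil => intro s; rfl
    | append_singleton l b ih =>
      intro s
      rw [List.foldl_append, List.length_append, ih]
      have haux : ∀ n, n ≤ l.length →
          (Nat.rec s (fun i acc => Option.casesOn (l[i]?) acc fun b => h a (acc, b)) n : σ) =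
          Nat.rec s (fun i acc => Option.casesOn ((l ++ [b])[i]?) acc fun b => h a (acc, b)) n := by
        intro n
        induction n with
        | zero => intro _; rfl
        | succ n ihn =>
          intro hn
          simp only [ihn (by omega), List.getElem?_append_left (show n < l.length by omega)]
      rw [haux _ le_rfl]
      simp
  simp only [key]
  refine Computable.nat_rec (Computable.list_length.comp hf) hg
    (h := fun a p => Option.casesOn ((f a)[p.1]?) p.2 fun b => h a (p.2, b)) ?_
  have h1 : Computable fun q : α × ℕ × σ => (f q.1)[q.2.1]? :=
    Computable.list_getElem?.comp (hf.comp Computable.fst) (Computable.fst.comp Computable.snd)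
  have h2 : Computable fun q : α × ℕ × σ => q.2.2 := Computable.snd.comp Computable.snd
  have h3 : Computable₂ fun (q : α × ℕ × σ) (b : β) => h q.1 (q.2.2, b) :=
    hh.comp (Computable.fst.comp Computable.fst)
      ((h2.comp Computable.fst).pair Computable.snd)
  exact Computable.option_casesOn h1 h2 h3

/-- All samples of a given size with entries from `S`. -/
def samplesOver (S : Sample) : ℕ → List Sample
  | 0 => [[]]
  | m + 1 => (samplesOver S m).flatMap fun T => S.map fun p => p :: T

lemma mem_samplesOver (S : Sample) : ∀ T : Sample, (∀ p ∈ T, p ∈ S) → T ∈ samplesOver S T.length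
  | [], _ => by simp [samplesOver]
  | p :: T, h => by
    simp only [List.length_cons, samplesOver, List.mem_flatMap, List.mem_map]
    exact ⟨T, mem_samplesOver S T fun q hq => h q (List.mem_cons_of_mem _ hq), p,
      h p List.mem_cons_self, rfl⟩

lemma primrec_samplesOver : Primrec₂ samplesOver := by
  have hg : Primrec₂ fun (S : Sample) (q : ℕ × List Sample) =>
      q.2.flatMap fun T => S.map fun p => p :: T := by
    refine Primrec.list_flatMap (Primrec.snd.comp Primrec.snd)
      (g := fun (r : Sample × ℕ × List Sample) T => r.1.map fun p => p :: T) ?_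
    refine Primrec.list_map (Primrec.fst.comp Primrec.fst)
      (g := fun (r : (Sample × ℕ × List Sample) × Sample) p => p :: r.2) ?_
    exact Primrec.list_cons.comp Primrec.snd (Primrec.snd.comp Primrec.fst)
  refine (Primrec.nat_rec (f := fun _ : Sample => [([] : Sample)]) (Primrec.const _) hg).of_eq
    fun S n => ?_
  induction n with
  | zero => rfl
  | succ n ih => simp only [samplesOver, ← ih]

/-- Among the samples in `samplesOver S M` and the empty sample (the seed of the search), one for
which the output of `A` trained on it makes the fewest errors on `S`. -/
def bestTraining (A : Learner) (S : Sample) (M : ℕ) : Sample :=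
  (samplesOver S M).foldl
    (fun b T => bif decide (errCount (A T) S < errCount (A b) S) then T else b) []

lemma foldl_argmin_le {α : Type*} (e : α → ℕ) : ∀ (l : List α) (b : α),
    let r := l.foldl (fun b t => bif decide (e t < e b) then t else b) b
    e r ≤ e b ∧ ∀ t ∈ l, e r ≤ e t
  | [], b => by simp
  | a :: l, b => by
    obtain ⟨h1, h2⟩ := foldl_argmin_le e l (bif decide (e a < e b) then a else b)
    simp only [List.foldl_cons, List.forall_mem_cons]
    have h3 : e (bif decide (e a < e b) then a else b) ≤ e b ∧
        e (bif decide (e a < e b) then a else b) ≤ e a := by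
      by_cases h : e a < e b
      · simp [h, h.le]
      · simp [h, not_lt.1 h]
    exact ⟨h1.trans h3.1, h1.trans h3.2, h2⟩

lemma computable_errCount {A : Learner} (hA : ComputableLearner A) :
    Computable₂ fun (T S : Sample) => errCount (A T) S := by
  have hstep : Computable₂ fun (q : Sample × Sample) (r : ℕ × (ℕ × Bool)) =>
      bif A q.1 r.2.1 != r.2.2 then r.1 + 1 else r.1 := by
    have hx : Computable fun z : (Sample × Sample) × ℕ × (ℕ × Bool) => A z.1.1 z.2.2.1 :=
      hA.comp (Computable.fst.comp Computable.fst)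
        (Computable.fst.comp (Computable.snd.comp Computable.snd))
    have hy : Computable fun z : (Sample × Sample) × ℕ × (ℕ × Bool) => z.2.2.2 :=
      Computable.snd.comp (Computable.snd.comp Computable.snd)
    have hc : Computable fun z : (Sample × Sample) × ℕ × (ℕ × Bool) => z.2.1 :=
      Computable.fst.comp Computable.snd
    have hb : Computable₂ fun a b : Bool => a != b :=
      (Primrec.dom_finite fun p : Bool × Bool => p.1 != p.2).to_comp
    exact Computable.cond (hb.comp hx hy) (Computable.succ.comp hc) hc
  refine (computable_list_foldl (f := fun q : Sample × Sample => q.2) (g := fun _ => 0)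
    Computable.snd (Computable.const 0) hstep).of_eq fun q => ?_
  have : ∀ (l : Sample) (c : ℕ),
      l.foldl (fun s b => bif A q.1 b.1 != b.2 then s + 1 else s) c = c + errCount (A q.1) l := by
    intro l
    induction l with
    | nil => intro c; rfl
    | cons p l ih =>
      intro c
      rw [List.foldl_cons, ih, errCount, errCount, List.countP_cons]
      cases (A q.1 p.1 != p.2) <;> simp
      omega
  simpa using this q.2 0

lemma computable_bestTraining {A : Learner} (hA : ComputableLearner A) :
    Computable₂ (bestTraining A) := by
  have hstep : Computable₂ fun (q : Sample × ℕ) (r : Sample × Sample) =>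
      bif decide (errCount (A r.2) q.1 < errCount (A r.1) q.1) then r.2 else r.1 := by
    have hS : Computable fun z : (Sample × ℕ) × Sample × Sample => z.1.1 :=
      Computable.fst.comp Computable.fst
    have hT : Computable fun z : (Sample × ℕ) × Sample × Sample => z.2.2 :=
      Computable.snd.comp Computable.snd
    have hB : Computable fun z : (Sample × ℕ) × Sample × Sample => z.2.1 :=
      Computable.fst.comp Computable.snd
    have hlt : Computable₂ fun a b : ℕ => decide (a < b) := Primrec.nat_lt.decide.to_comp
    exact Computable.cond (hlt.comp ((computable_errCount hA).comp hT hS)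
      ((computable_errCount hA).comp hB hS)) hT hB
  exact computable_list_foldl (f := fun q : Sample × ℕ => samplesOver q.1 q.2) (g := fun _ => [])
    primrec_samplesOver.to_comp (Computable.const []) hstep

/-- A computable proper learner with computable sample complexity bound `g` yields a computable
ERM: on `S`, accuracy better than `1/|S|` for the uniform distribution on `S` means optimality, so
some training sample of size `g (|S| + 2)` drawn from `S` makes `A` output an empirical risk
minimizer, and a finite search finds it. -/
lemma exists_computable_ERM {A : Learner} {H : Set Hyp} (hA : ComputableLearner A)
    (hprop : ProperFor A H) {g : ℕ → ℕ} (hg : Computable g)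
    (hP : ∀ n, PACCondition A H n (g n)) :
    ∃ B : Learner, ComputableLearner B ∧ IsERM B H := by
  refine ⟨fun S => A (bestTraining A S (g (S.length + 2))), ?_, fun S => ⟨hprop _, ?_⟩⟩
  · have hlen : Computable fun q : Sample × ℕ => g (q.1.length + 2) :=
      hg.comp ((Primrec.nat_add.comp (Primrec.list_length.comp Primrec.fst)
        (Primrec.const 2)).to_comp)
    exact hA.comp ((computable_bestTraining hA).comp Computable.fst hlen) Computable.snd
  · intro h hh
    by_cases hS : S = []
    · subst hS
      simp [empError]
    obtain ⟨T, hl, hm, hT⟩ := exists_good_resample_nat (by omega) (hP (S.length + 2)) S hS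
    have h1 := hT h hh
    -- an excess of one error would cost `|S| + 2`, while only `|S|` is allowed
    have h2 : errCount (A T) S ≤ errCount h S := by nlinarith
    have h3 := (foldl_argmin_le (fun T => errCount (A T) S) (samplesOver S T.length) []).2 T
      (mem_samplesOver S T hm)
    rw [hl] at h3
    exact ENNReal.div_le_div_right (by exact_mod_cast h3.trans h2) _

end Computability

/-! ### Symmetrization -/

section Symmetrization

/-- The number of errors on a single example, as a real number. -/
noncomputable def loss (h : Hyp) (p : ℕ × Bool) : ℝ := if h p.1 ≠ p.2 then 1 else 0

/-- On a list of pairs `(p, q)` of examples, the number of errors of `h` on the second entries minus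
the number of errors on the first entries. -/
noncomputable def errDiff (h : Hyp) (Z : List ((ℕ × Bool) × (ℕ × Bool))) : ℝ :=
  (Z.map fun z => loss h z.2 - loss h z.1).sum

/-- The average of `F` over the `2 ^ |Z|` lists obtained from `Z` by independently swapping or not
swapping the two entries of each pair. -/
noncomputable def swapAvg {α : Type*} : List (α × α) → (List (α × α) → ℝ≥0∞) → ℝ≥0∞
  | [], F => F []
  | z :: Z, F => (swapAvg Z (fun W => F (z :: W)) + swapAvg Z fun W => F (z.swap :: W)) / 2

lemma swapAvg_mono {α : Type*} : ∀ (Z : List (α × α)) {F G : List (α × α) → ℝ≥0∞},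
    (∀ W, List.Forall₂ (fun w z => w = z ∨ w = z.swap) W Z → F W ≤ G W) →
    swapAvg Z F ≤ swapAvg Z G
  | [], _, _, h => h [] .nil
  | z :: Z, F, G, h => by
    have h1 := swapAvg_mono Z (F := fun W => F (z :: W)) (G := fun W => G (z :: W))
      fun W hW => h _ (.cons (.inl rfl) hW)
    have h2 := swapAvg_mono Z (F := fun W => F (z.swap :: W)) (G := fun W => G (z.swap :: W))
      fun W hW => h _ (.cons (.inr rfl) hW)
    exact ENNReal.div_le_div_right (add_le_add h1 h2) _

lemma swapAvg_sum {α ι : Type*} (T : Finset ι) : ∀ (Z : List (α × α))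
    (F : ι → List (α × α) → ℝ≥0∞),
    swapAvg Z (fun W => ∑ i ∈ T, F i W) = ∑ i ∈ T, swapAvg Z (F i)
  | [], _ => rfl
  | z :: Z, F => by
    simp only [swapAvg, swapAvg_sum T Z, div_eq_mul_inv, ← Finset.sum_add_distrib, Finset.sum_mul]

lemma swapAvg_const_mul {α : Type*} (c : ℝ≥0∞) : ∀ (Z : List (α × α)) (F : List (α × α) → ℝ≥0∞),
    swapAvg Z (fun W => c * F W) = c * swapAvg Z F
  | [], _ => rfl
  | z :: Z, F => by
    simp only [swapAvg, swapAvg_const_mul c Z, div_eq_mul_inv, ← mul_add, mul_assoc]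

/-- Hoeffding's moment generating function bound for random swaps, from `cosh x ≤ exp (x² / 2)`. -/
lemma swapAvg_exp_errDiff_le (h : Hyp) (t : ℝ) : ∀ Z : List ((ℕ × Bool) × (ℕ × Bool)),
    swapAvg Z (fun W => ENNReal.ofReal (Real.exp (t * errDiff h W))) ≤
      ENNReal.ofReal (Real.exp (Z.length * (t ^ 2 / 2)))
  | [] => by simp [swapAvg, errDiff]
  | z :: Z => by
    have hsplit : ∀ (w : (ℕ × Bool) × (ℕ × Bool)) W,
        ENNReal.ofReal (Real.exp (t * errDiff h (w :: W))) =
          ENNReal.ofReal (Real.exp (t * (loss h w.2 - loss h w.1))) *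
            ENNReal.ofReal (Real.exp (t * errDiff h W)) := by
      intro w W
      rw [← ENNReal.ofReal_mul (Real.exp_pos _).le, ← Real.exp_add]
      simp [errDiff, mul_add]
    simp only [swapAvg, hsplit, swapAvg_const_mul]
    rw [← add_mul, div_eq_mul_inv, mul_right_comm, ← div_eq_mul_inv]
    set a := t * (loss h z.2 - loss h z.1) with ha
    have ha' : t * (loss h z.swap.2 - loss h z.swap.1) = -a := by
      simp only [Prod.fst_swap, Prod.snd_swap, ha]
      ring
    have haa : a ^ 2 ≤ t ^ 2 := by
      have : (loss h z.2 - loss h z.1) ^ 2 ≤ 1 := by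
        unfold loss
        split_ifs <;> norm_num
      rw [ha, mul_pow]
      nlinarith [sq_nonneg t]
    have hcosh : (ENNReal.ofReal (Real.exp a) + ENNReal.ofReal (Real.exp (-a))) / 2 ≤
        ENNReal.ofReal (Real.exp (t ^ 2 / 2)) := by
      rw [← ENNReal.ofReal_add (Real.exp_pos _).le (Real.exp_pos _).le,
        show (2 : ℝ≥0∞) = ENNReal.ofReal 2 by simp, ← ENNReal.ofReal_div_of_pos two_pos]
      refine ENNReal.ofReal_le_ofReal ?_
      rw [← Real.cosh_eq]
      exact (Real.cosh_le_exp_half_sq a).trans (Real.exp_le_exp.2 (by linarith))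
    rw [ha']
    refine (mul_le_mul' hcosh (swapAvg_exp_errDiff_le h t Z)).trans_eq ?_
    rw [← ENNReal.ofReal_mul (Real.exp_pos _).le, ← Real.exp_add]
    congr 2
    push_cast [List.length_cons]
    ring

/-- The expectation of a function of `m` i.i.d. pairs of independent examples. -/
noncomputable def doubleExp (D : PMF (ℕ × Bool)) (m : ℕ)
    (F : List ((ℕ × Bool) × (ℕ × Bool)) → ℝ≥0∞) : ℝ≥0∞ :=
  pmfExp (iidPMF D m) fun S => pmfExp (iidPMF D m) fun S' => F (S.zip S')

lemma doubleExp_succ (D : PMF (ℕ × Bool)) (m : ℕ)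
    (F : List ((ℕ × Bool) × (ℕ × Bool)) → ℝ≥0∞) :
    doubleExp D (m + 1) F =
      pmfExp D fun p => pmfExp D fun q => doubleExp D m fun Z => F ((p, q) :: Z) := by
  simp only [doubleExp, pmfExp_iid_succ, List.zip_cons_cons]
  congr 1
  funext p
  rw [pmfExp_comm]

/-- Swapping entries within pairs does not change the joint distribution. -/
lemma doubleExp_swapAvg (D : PMF (ℕ × Bool)) : ∀ (m : ℕ)
    (F : List ((ℕ × Bool) × (ℕ × Bool)) → ℝ≥0∞),
    doubleExp D m (fun Z => swapAvg Z F) = doubleExp D m F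
  | 0, F => by simp [doubleExp, pmfExp_iid_zero, swapAvg]
  | m + 1, F => by
    have hlin : ∀ G₁ G₂ : List ((ℕ × Bool) × (ℕ × Bool)) → ℝ≥0∞,
        doubleExp D m (fun Z => (G₁ Z + G₂ Z) / 2) =
          2⁻¹ * (doubleExp D m G₁ + doubleExp D m G₂) := by
      intro G₁ G₂
      simp only [doubleExp, div_eq_mul_inv, mul_comm _ (2⁻¹ : ℝ≥0∞), pmfExp_const_mul, pmfExp_add]
    simp only [doubleExp_succ, swapAvg, hlin, doubleExp_swapAvg D m, Prod.swap_prod_mk,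
      pmfExp_const_mul, pmfExp_add]
    rw [pmfExp_comm D D fun p q => doubleExp D m fun Z => F ((q, p) :: Z), ← two_mul, ← mul_assoc,
      ENNReal.inv_mul_cancel two_ne_zero ENNReal.ofNat_ne_top, one_mul]

lemma doubleExp_le (D : PMF (ℕ × Bool)) (m : ℕ) {c : ℝ≥0∞}
    {F : List ((ℕ × Bool) × (ℕ × Bool)) → ℝ≥0∞}
    (h : ∀ Z, Z.length = m → swapAvg Z F ≤ c) : doubleExp D m F ≤ c := by
  rw [← doubleExp_swapAvg, doubleExp]
  refine (pmfExp_iid_le_of_length D m (g := fun _ => c) fun S hS => ?_).trans_eq (pmfExp_const _ _)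
  refine (pmfExp_iid_le_of_length D m (g := fun _ => c) fun S' hS' => ?_).trans_eq
    (pmfExp_const _ _)
  exact h _ (by simp [hS, hS'])

lemma genError_le_one (D : PMF (ℕ × Bool)) (h : Hyp) : genError D h ≤ 1 := by
  rw [genError, toOuterMeasure_eq_pmfExp]
  refine (pmfExp_mono D (g := fun _ => 1) fun p => ?_).trans_eq (pmfExp_const _ _)
  exact Set.indicator_le_self' (fun _ _ => zero_le) p

/-- Jensen's inequality for one example. -/
lemma exp_genError_le (D : PMF (ℕ × Bool)) (h : Hyp) (t : ℝ) :
    ENNReal.ofReal (Real.exp (t * (genError D h).toReal)) ≤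
      pmfExp D fun q => ENNReal.ofReal (Real.exp (t * loss h q)) := by
  set E : Set (ℕ × Bool) := {p | h p.1 ≠ p.2} with hE
  set L := (genError D h).toReal with hL
  have hL1 : L ≤ 1 := ENNReal.toReal_le_of_le_ofReal zero_le_one (by simpa using genError_le_one D h)
  have hL0 : 0 ≤ L := ENNReal.toReal_nonneg
  have hfin : genError D h ≠ ⊤ := ((genError_le_one D h).trans_lt ENNReal.one_lt_top).ne
  have hbad : pmfExp D (E.indicator fun _ => 1) = ENNReal.ofReal L := by
    rw [hL, ENNReal.ofReal_toReal hfin, genError, toOuterMeasure_eq_pmfExp]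
  have hgood : pmfExp D (Eᶜ.indicator fun _ => 1) = ENNReal.ofReal (1 - L) := by
    have hadd : pmfExp D (E.indicator fun _ => 1) + pmfExp D (Eᶜ.indicator fun _ => 1) = 1 := by
      rw [← pmfExp_add]
      refine Eq.trans ?_ (pmfExp_const D 1)
      congr 1
      funext p
      by_cases hp : p ∈ E <;> simp [hp]
    rw [hbad, add_comm] at hadd
    rw [ENNReal.ofReal_sub _ hL0, ENNReal.ofReal_one]
    exact ENNReal.eq_sub_of_add_eq ENNReal.ofReal_ne_top hadd
  have hint : (fun q => ENNReal.ofReal (Real.exp (t * loss h q))) = fun q =>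
      ENNReal.ofReal (Real.exp t) * E.indicator (fun _ => 1) q + Eᶜ.indicator (fun _ => 1) q := by
    funext q
    by_cases hq : h q.1 = q.2 <;> simp [loss, hE, hq]
  rw [hint, pmfExp_add, pmfExp_const_mul, hbad, hgood, ← ENNReal.ofReal_mul (Real.exp_pos _).le,
    ← ENNReal.ofReal_add (by positivity) (by linarith)]
  refine ENNReal.ofReal_le_ofReal ?_
  have hconv := convexOn_exp.2 (Set.mem_univ t) (Set.mem_univ 0) hL0 (by linarith : 0 ≤ 1 - L)
    (by ring)
  simp only [smul_eq_mul, mul_zero, add_zero, Real.exp_zero, mul_one] at hconv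
  rw [mul_comm t L, mul_comm (Real.exp t)]
  exact hconv

/-- Jensen's inequality: the true error `m * L_D(h)` may be replaced by the number of errors on an
independent ghost sample. -/
lemma exp_sub_errCount_le (D : PMF (ℕ × Bool)) (h : Hyp) (t : ℝ) : ∀ (m : ℕ) (S : Sample),
    S.length = m →
    ENNReal.ofReal (Real.exp (t * (m * (genError D h).toReal - errCount h S))) ≤
      pmfExp (iidPMF D m) fun S' => ENNReal.ofReal (Real.exp (t * errDiff h (S.zip S')))
  | 0, S, hS => by
    rw [List.length_eq_zero_iff.1 hS]
    simp [pmfExp_iid_zero, errDiff, errCount]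
  | m + 1, [], hS => by simp at hS
  | m + 1, p :: S, hS => by
    have ih := exp_sub_errCount_le D h t m S (by simpa using hS)
    rw [pmfExp_iid_succ]
    have hsplit : ∀ q S', ENNReal.ofReal (Real.exp (t * errDiff h ((p :: S).zip (q :: S')))) =
        (ENNReal.ofReal (Real.exp (-(t * loss h p))) * ENNReal.ofReal (Real.exp (t * loss h q))) *
          ENNReal.ofReal (Real.exp (t * errDiff h (S.zip S'))) := by
      intro q S'
      rw [← ENNReal.ofReal_mul (Real.exp_pos _).le, ← Real.exp_add,
        ← ENNReal.ofReal_mul (Real.exp_pos _).le, ← Real.exp_add]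
      congr 2
      simp only [errDiff, List.zip_cons_cons, List.map_cons, List.sum_cons]
      ring
    simp only [hsplit, pmfExp_const_mul]
    simp only [mul_assoc, pmfExp_const_mul]
    have hcomm : ∀ c : ℝ≥0∞, pmfExp D (fun q => ENNReal.ofReal (Real.exp (t * loss h q)) * c) =
        pmfExp D (fun q => ENNReal.ofReal (Real.exp (t * loss h q))) * c := by
      intro c
      simp only [mul_comm _ c, pmfExp_const_mul]
    rw [hcomm]
    refine le_trans (le_of_eq ?_) (mul_le_mul_right (mul_le_mul' (exp_genError_le D h t) ih) _)
    rw [← ENNReal.ofReal_mul (Real.exp_pos _).le, ← Real.exp_add,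
      ← ENNReal.ofReal_mul (Real.exp_pos _).le, ← Real.exp_add]
    congr 2
    have hcount : (errCount h (p :: S) : ℝ) = errCount h S + loss h p := by
      simp only [errCount, List.countP_cons, loss]
      by_cases hp : h p.1 = p.2 <;> simp [hp]
    rw [hcount]
    push_cast
    ring

end Symmetrization

/-! ### Uniform convergence -/

section UniformConvergence

/-- The Sauer–Shelah bound, in the form of a small set of representatives of the restrictions of
`H` to `X`. -/
lemma exists_representatives {H : Set Hyp} {d : ℕ} (hd : VCDimAtMost H d) (X : Finset ℕ) :
    ∃ T : Finset Hyp, T.card ≤ (d + 1) * (X.card + 1) ^ d ∧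
      ∀ h ∈ H, ∃ h' ∈ T, ∀ x ∈ X, h x = h' x := by
  classical
  -- the traces of `H` on `X`, identified with subsets of `X`
  let 𝒜 : Finset (Finset ℕ) :=
    X.powerset.filter fun t => ∃ h ∈ H, t = X.filter fun x => h x = true
  have hsub : 𝒜.shatterer ⊆
      (Finset.range (d + 1)).biUnion fun k => X.powersetCard k := by
    intro s hs
    rw [Finset.mem_shatterer] at hs
    obtain ⟨t, ht, hst⟩ := hs.exists_superset
    have hsX : s ⊆ X := hst.trans (Finset.mem_powerset.1 (Finset.mem_filter.1 ht).1)
    have hsH : Shatters H s := by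
      intro g
      obtain ⟨u, hu, hsu⟩ := hs (Finset.filter_subset (fun x => g x = true) s)
      obtain ⟨h, hh, rfl⟩ := (Finset.mem_filter.1 hu).2
      refine ⟨h, hh, fun x hx => ?_⟩
      have h1 : h x = true ↔ g x = true := by
        have := Finset.ext_iff.1 hsu x
        simpa [hx, hsX hx] using this
      exact Bool.eq_iff_iff.2 h1
    rw [Finset.mem_biUnion]
    exact ⟨s.card, Finset.mem_range.2 (Nat.lt_succ_of_le (hd s hsH)),
      Finset.mem_powersetCard.2 ⟨hsX, rfl⟩⟩
  refine ⟨𝒜.image fun t x => decide (x ∈ t), ?_, fun h hh => ?_⟩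
  · calc _ ≤ 𝒜.card := Finset.card_image_le
      _ ≤ 𝒜.shatterer.card := Finset.card_le_card_shatterer 𝒜
      _ ≤ _ := Finset.card_le_card hsub
      _ ≤ ∑ k ∈ Finset.range (d + 1), (X.powersetCard k).card := Finset.card_biUnion_le
      _ ≤ ∑ k ∈ Finset.range (d + 1), (X.card + 1) ^ d := by
        refine Finset.sum_le_sum fun k hk => ?_
        rw [Finset.card_powersetCard]
        calc _ ≤ X.card ^ k := Nat.choose_le_pow _ _
          _ ≤ (X.card + 1) ^ k := Nat.pow_le_pow_left (Nat.le_succ _) _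
          _ ≤ (X.card + 1) ^ d :=
            Nat.pow_le_pow_right (Nat.succ_pos _) (Nat.lt_succ_iff.1 (Finset.mem_range.1 hk))
      _ = (d + 1) * (X.card + 1) ^ d := by simp
  · -- the indicator of the trace of `h` represents `h`
    refine ⟨fun x => decide (x ∈ X.filter fun x => h x = true), ?_, fun x hx => ?_⟩
    · refine Finset.mem_image.2 ⟨X.filter fun x => h x = true, ?_, rfl⟩
      exact Finset.mem_filter.2 ⟨Finset.mem_powerset.2 (Finset.filter_subset _ _), h, hh, rfl⟩
    · simp [hx]

/-- The union bound over the restrictions of `H` to the at most `2 * |Z|` points occurring in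
`Z`, none of which are affected by swapping. -/
lemma swapAvg_iSup_le {H : Set Hyp} {d : ℕ} (hd : VCDimAtMost H d) (t : ℝ)
    (Z : List ((ℕ × Bool) × (ℕ × Bool))) :
    swapAvg Z (fun W => ⨆ h ∈ H, ENNReal.ofReal (Real.exp (t * errDiff h W))) ≤
      ENNReal.ofReal ((d + 1) * (2 * Z.length + 1) ^ d * Real.exp (Z.length * (t ^ 2 / 2))) := by
  classical
  let X : Finset ℕ := (Z.map fun z => z.1.1).toFinset ∪ (Z.map fun z => z.2.1).toFinset
  obtain ⟨T, hTc, hT⟩ := exists_representatives hd X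
  have hX : X.card ≤ 2 * Z.length := by
    refine (Finset.card_union_le _ _).trans ?_
    have h1 := List.toFinset_card_le (Z.map fun z => z.1.1)
    have h2 := List.toFinset_card_le (Z.map fun z => z.2.1)
    simp only [List.length_map] at h1 h2
    omega
  have hmono : swapAvg Z (fun W => ⨆ h ∈ H, ENNReal.ofReal (Real.exp (t * errDiff h W))) ≤
      swapAvg Z (fun W => ∑ h ∈ T, ENNReal.ofReal (Real.exp (t * errDiff h W))) := by
    refine swapAvg_mono Z fun W hW => iSup₂_le fun h hh => ?_
    obtain ⟨h', hh', heq⟩ := hT h hh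
    have hWX : ∀ w ∈ W, w.1.1 ∈ X ∧ w.2.1 ∈ X := by
      intro w hw
      have hz : ∃ z ∈ Z, w = z ∨ w = z.swap := by
        clear heq hX
        clear hT
        clear_value X
        induction hW with
        | nil => simp at hw
        | cons hab _ ih =>
          rcases List.mem_cons.1 hw with rfl | hw
          · exact ⟨_, List.mem_cons_self, hab⟩
          · obtain ⟨z, hz, h2⟩ := ih hw
            exact ⟨z, List.mem_cons_of_mem _ hz, h2⟩
      obtain ⟨z, hz, hwz⟩ := hz
      have h1 : z.1.1 ∈ X := Finset.mem_union_left _ (by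
        rw [List.mem_toFinset]
        exact List.mem_map.2 ⟨z, hz, rfl⟩)
      have h2 : z.2.1 ∈ X := Finset.mem_union_right _ (by
        rw [List.mem_toFinset]
        exact List.mem_map.2 ⟨z, hz, rfl⟩)
      rcases hwz with rfl | rfl
      exacts [⟨h1, h2⟩, ⟨h2, h1⟩]
    have hdiff : errDiff h W = errDiff h' W := by
      unfold errDiff
      congr 1
      refine List.map_congr_left fun w hw => ?_
      simp only [loss, heq _ (hWX w hw).1, heq _ (hWX w hw).2]
    rw [hdiff]
    exact Finset.single_le_sum (f := fun h => ENNReal.ofReal (Real.exp (t * errDiff h W)))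
      (fun _ _ => zero_le) hh'
  refine hmono.trans ?_
  rw [swapAvg_sum]
  refine (Finset.sum_le_sum fun h _ => swapAvg_exp_errDiff_le h t Z).trans ?_
  rw [Finset.sum_const, nsmul_eq_mul, ENNReal.ofReal_mul (by positivity)]
  refine mul_le_mul_left ?_ _
  rw [← ENNReal.ofReal_natCast]
  refine ENNReal.ofReal_le_ofReal ?_
  calc (T.card : ℝ) ≤ (((d + 1) * (X.card + 1) ^ d : ℕ) : ℝ) := by exact_mod_cast hTc
    _ = (d + 1) * (X.card + 1 : ℝ) ^ d := by push_cast; ring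
    _ ≤ _ := by
      have : (X.card : ℝ) ≤ 2 * Z.length := by exact_mod_cast hX
      gcongr

/-- For `t > 0`, the samples of size `m` for which some `h ∈ H` has empirical error at least `t`
below its true error; for `t < 0`, those for which some `h ∈ H` has empirical error at least `|t|`
above its true error. -/
def deviationEvent (D : PMF (ℕ × Bool)) (H : Set Hyp) (m : ℕ) (t : ℝ) : Set Sample :=
  {S | ∃ h ∈ H, m * t ^ 2 ≤ t * (m * (genError D h).toReal - errCount h S)}

/-- One-sided uniform convergence, by Markov's inequality for the exponential moment of the
deviation. -/
lemma deviationEvent_le (D : PMF (ℕ × Bool)) {H : Set Hyp} {d : ℕ} (hd : VCDimAtMost H d)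
    (m : ℕ) (t : ℝ) :
    samplePr D m (deviationEvent D H m t) ≤
      ENNReal.ofReal ((d + 1) * (2 * m + 1) ^ d * Real.exp (-(m * t ^ 2 / 2))) := by
  let F : List ((ℕ × Bool) × (ℕ × Bool)) → ℝ≥0∞ :=
    fun W => ⨆ h ∈ H, ENNReal.ofReal (Real.exp (t * errDiff h W))
  rw [samplePr, toOuterMeasure_eq_pmfExp]
  have h1 : pmfExp (iidPMF D m) ((deviationEvent D H m t).indicator fun _ => 1) ≤
      pmfExp (iidPMF D m) fun S => ENNReal.ofReal (Real.exp (-(m * t ^ 2))) *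
        pmfExp (iidPMF D m) fun S' => F (S.zip S') := by
    refine pmfExp_iid_le_of_length D m fun S hS => ?_
    by_cases hE : S ∈ deviationEvent D H m t
    swap
    · simp [hE]
    obtain ⟨h, hh, hdev⟩ := hE
    have h2 : pmfExp (iidPMF D m) (fun S' =>
        ENNReal.ofReal (Real.exp (t * errDiff h (S.zip S')))) ≤
        pmfExp (iidPMF D m) fun S' => F (S.zip S') :=
      pmfExp_mono _ fun S' => le_iSup₂ (f := fun h (_ : h ∈ H) =>
        ENNReal.ofReal (Real.exp (t * errDiff h (S.zip S')))) h hh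
    have h3 := (exp_sub_errCount_le D h t m S hS).trans h2
    refine le_trans (Set.indicator_le_self' (fun _ _ => zero_le) S) ?_
    refine le_trans ?_ (mul_le_mul_right h3 _)
    rw [← ENNReal.ofReal_mul (Real.exp_pos _).le, ← Real.exp_add]
    rw [← ENNReal.ofReal_one]
    refine ENNReal.ofReal_le_ofReal (Real.one_le_exp ?_)
    linarith
  refine h1.trans ?_
  rw [pmfExp_const_mul]
  have h4 : doubleExp D m F ≤
      ENNReal.ofReal ((d + 1) * (2 * m + 1) ^ d * Real.exp (m * (t ^ 2 / 2))) :=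
    doubleExp_le D m fun Z hZ => by
      have := swapAvg_iSup_le hd t Z
      rwa [hZ] at this
  refine (mul_le_mul_right h4 _).trans_eq ?_
  rw [← ENNReal.ofReal_mul (Real.exp_pos _).le, mul_left_comm, ← Real.exp_add]
  congr 3
  ring

/-- A sample size sufficient for empirical risk minimization to reach accuracy and confidence `1/n`
on classes of VC dimension at most `d`. The constants come from `2 * m + 1 ≤ 3 * m` and
`exp x ≥ x ^ (d + 1) / (d + 1)!` at `x = m / (8 * n ^ 2)`; no optimality is intended. -/
def sampleBound (d n : ℕ) : ℕ :=
  (2 * (d + 1) * (d + 1).factorial * 3 ^ d * 8 ^ (d + 1)) * n ^ (2 * d + 3)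

lemma computable_sampleBound (d : ℕ) : Computable (sampleBound d) := by
  have hpow : ∀ k : ℕ, Primrec fun n : ℕ => n ^ k := by
    intro k
    induction k with
    | zero => simpa using Primrec.const 1
    | succ k ih => exact (Primrec.nat_mul.comp ih Primrec.id).of_eq fun n => (pow_succ n k).symm
  exact (Primrec.nat_mul.comp (Primrec.const _) (hpow _)).to_comp

lemma sampleBound_spec {d n m : ℕ} (hn : 0 < n) (hm : sampleBound d n ≤ m) :
    0 < m ∧ 2 * ((d + 1) * (2 * m + 1) ^ d * Real.exp (-(m * (1 / (2 * n : ℝ)) ^ 2 / 2))) ≤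
      (n : ℝ)⁻¹ := by
  have hm0 : 0 < m := lt_of_lt_of_le (by unfold sampleBound; positivity) hm
  refine ⟨hm0, ?_⟩
  have hn' : (0 : ℝ) < n := by exact_mod_cast hn
  have hm1 : (1 : ℝ) ≤ m := by exact_mod_cast hm0
  set x : ℝ := m * (1 / (2 * n : ℝ)) ^ 2 / 2 with hx
  have hx' : x = m / (8 * n ^ 2) := by
    rw [hx]
    field_simp
    norm_num
  have hexp := Real.pow_div_factorial_le_exp (x := x) (by positivity) (d + 1)
  have hbound : (2 * (d + 1) * (d + 1).factorial * 3 ^ d * 8 ^ (d + 1)) * n ^ (2 * d + 3) ≤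
      (m : ℝ) := by
    exact_mod_cast hm
  have hmain : 2 * ((d + 1) * (2 * m + 1 : ℝ) ^ d) * n ≤ Real.exp x := by
    refine le_trans ?_ hexp
    rw [hx', div_pow, div_div, le_div_iff₀ (by positivity)]
    have h3 : (2 * m + 1 : ℝ) ^ d ≤ (3 * m) ^ d := by
      gcongr
      linarith
    have h4 : 2 * ((d + 1) * (3 * m : ℝ) ^ d) * n * ((8 * (n : ℝ) ^ 2) ^ (d + 1) *
        ((d + 1).factorial : ℝ)) ≤ (m : ℝ) ^ (d + 1) := by
      calc 2 * ((d + 1) * (3 * m : ℝ) ^ d) * n * ((8 * (n : ℝ) ^ 2) ^ (d + 1) *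
            ((d + 1).factorial : ℝ))
          = ((2 * (d + 1) * (d + 1).factorial * 3 ^ d * 8 ^ (d + 1)) * n ^ (2 * d + 3) : ℝ) *
            (m : ℝ) ^ d := by ring
        _ ≤ m * (m : ℝ) ^ d := by gcongr
        _ = (m : ℝ) ^ (d + 1) := by ring
    refine le_trans ?_ h4
    gcongr
  have hpos := Real.exp_pos x
  rw [Real.exp_neg, ← mul_assoc, ← div_eq_mul_inv, div_le_iff₀ hpos, ← div_eq_inv_mul,
    le_div_iff₀ hn']
  exact hmain

/-- Off the two deviation events, every empirical error is within `1/(2n)` of the true error, so an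
empirical risk minimizer is within `1/n` of the optimum. -/
lemma genError_le_of_not_deviation {A : Learner} {H : Set Hyp} (hA : IsERM A H)
    (D : PMF (ℕ × Bool)) {n m : ℕ} (hn : 0 < n) (hm : 0 < m) {S : Sample} (hS : S.length = m)
    (h1 : S ∉ deviationEvent D H m (1 / (2 * n)))
    (h2 : S ∉ deviationEvent D H m (-(1 / (2 * n)))) :
    genError D (A S) ≤ (⨅ h ∈ H, genError D h) + (n : ℝ≥0∞)⁻¹ := by
  have hn' : (0 : ℝ) < n := by exact_mod_cast hn
  have hm' : (0 : ℝ) < m := by exact_mod_cast hm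
  have hfin : ∀ h, genError D h ≠ ⊤ := fun h =>
    ((genError_le_one D h).trans_lt ENNReal.one_lt_top).ne
  set e : ℝ := 1 / (2 * n) with he
  have hepos : 0 < e := by positivity
  rw [← tsub_le_iff_right]
  refine le_iInf₂ fun h hh => ?_
  rw [tsub_le_iff_right]
  have hemp : errCount (A S) S ≤ errCount h S := by
    have := (hA S).2 h hh
    unfold empError at this
    rw [ENNReal.div_le_iff (by simp [hS, hm.ne']) (by simp),
      ENNReal.div_mul_cancel (by simp [hS, hm.ne']) (by simp)] at this
    exact_mod_cast this
  have h3 : m * (genError D (A S)).toReal - errCount (A S) S < m * e := by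
    by_contra hcon
    refine h1 ⟨A S, (hA S).1, ?_⟩
    nlinarith
  have h4 : errCount h S - m * (genError D h).toReal < m * e := by
    by_contra hcon
    refine h2 ⟨h, hh, ?_⟩
    nlinarith
  have hemp' : (errCount (A S) S : ℝ) ≤ errCount h S := by exact_mod_cast hemp
  have h5 : (genError D (A S)).toReal ≤ (genError D h).toReal + (n : ℝ)⁻¹ := by
    have h6 : (n : ℝ)⁻¹ = 2 * e := by
      rw [he]
      field_simp
    rw [h6]
    refine le_of_mul_le_mul_left ?_ hm'
    nlinarith
  have hinv : ((n : ℝ≥0∞))⁻¹ = ENNReal.ofReal ((n : ℝ)⁻¹) := by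
    rw [ENNReal.ofReal_inv_of_pos hn', ENNReal.ofReal_natCast]
  rw [← ENNReal.ofReal_toReal (hfin (A S)), ← ENNReal.ofReal_toReal (hfin h), hinv,
    ← ENNReal.ofReal_add ENNReal.toReal_nonneg (by positivity)]
  exact ENNReal.ofReal_le_ofReal h5

/-- An ERM for a class of VC dimension at most `d` satisfies the PAC inequality from `sampleBound d n`
on, because the two deviation events together have probability at most `1/n`. -/
lemma PACCondition_of_isERM {A : Learner} {H : Set Hyp} {d : ℕ} (hA : IsERM A H)
    (hd : VCDimAtMost H d) {n m : ℕ} (hm : sampleBound d n ≤ m) : PACCondition A H n m := by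
  intro D
  rcases Nat.eq_zero_or_pos n with rfl | hn
  · simp
  obtain ⟨hm0, hspec⟩ := sampleBound_spec hn hm
  set G : Set Sample := {S | genError D (A S) ≤ (⨅ h ∈ H, genError D h) + ((n : ℝ≥0∞))⁻¹}
  set E₁ := deviationEvent D H m (1 / (2 * n))
  set E₂ := deviationEvent D H m (-(1 / (2 * n)))
  have hcover : 1 ≤ samplePr D m G + (samplePr D m E₁ + samplePr D m E₂) := by
    simp only [samplePr, toOuterMeasure_eq_pmfExp, ← pmfExp_add]
    refine (pmfExp_const (iidPMF D m) 1).symm.le.trans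
      (pmfExp_iid_le_of_length D m fun S hS => ?_)
    by_cases h1 : S ∈ E₁
    · simp only [Set.indicator_of_mem h1]
      exact le_add_left (le_add_right le_rfl)
    by_cases h2 : S ∈ E₂
    · simp only [Set.indicator_of_mem h2]
      exact le_add_left (le_add_left le_rfl)
    have hG : S ∈ G := genError_le_of_not_deviation hA D hn hm0 hS h1 h2
    simp only [Set.indicator_of_mem hG]
    exact le_add_right le_rfl
  rw [tsub_le_iff_right]
  refine hcover.trans (add_le_add_right ?_ _)
  have hn' : (0 : ℝ) < n := by exact_mod_cast hn
  have hinv : ((n : ℝ≥0∞))⁻¹ = ENNReal.ofReal ((n : ℝ)⁻¹) := by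
    rw [ENNReal.ofReal_inv_of_pos hn', ENNReal.ofReal_natCast]
  have hE₁ := deviationEvent_le D hd m (1 / (2 * n))
  have hE₂ := deviationEvent_le D hd m (-(1 / (2 * n)))
  rw [neg_sq] at hE₂
  refine (add_le_add hE₁ hE₂).trans ?_
  rw [← ENNReal.ofReal_add (by positivity) (by positivity), hinv, ← two_mul]
  exact ENNReal.ofReal_le_ofReal hspec

end UniformConvergence

/-! ### The characterization -/

/-- `H` is properly SCPAC learnable iff it has a computable ERM and
its VC dimension is finite. -/
theorem properSCPAC_iff_computable_ERM_and_finiteVC (H : Set Hyp) :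
    ProperlySCPACLearnable H ↔
      ((∃ A : Learner, ComputableLearner A ∧ IsERM A H) ∧ FiniteVCDim H) := by
  constructor
  · rintro ⟨A, hA, hprop, hPAC, g, hg, hbound⟩
    have hP : ∀ n, PACCondition A H n (g n) := fun n =>
      (Nat.sInf_mem (hPAC n) : ∀ m ≥ sampleComplexity A H n, PACCondition A H n m) _ (hbound n)
    exact ⟨exists_computable_ERM hA hprop hg hP, finiteVCDim_of_PACCondition (hP 8)⟩
  · rintro ⟨⟨A, hA, hERM⟩, d, hd⟩
    have hP : ∀ n, ∀ m ≥ sampleBound d n, PACCondition A H n m := fun n m hm =>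
      PACCondition_of_isERM hERM hd hm
    exact ⟨A, hA, fun S => (hERM S).1, fun n => ⟨_, hP n⟩, sampleBound d,
      computable_sampleBound d, fun n => Nat.sInf_le (hP n)⟩
end
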